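/- arXiv:2603.04303 — 9 statements merged into one kernel-verified Lean document; each statement's English description precedes it below -/
import Mathlib

section
/- Let L be an algebraically closed field, a ∈ Lˣ, and let σ be the automorphism of L(X) fixing L with σ(X) = X + a. For a nonzero β ∈ L(X), β belongs to G_σ if and only if c_β = 1 and m_β ∈ Fsfun_σ(L,ℤ). Equivalently, the map β ↦ m_β restricts to a group isomorphism from G_σ onto Fsfun_σ(L,ℤ). -/
/-- For a field `k` and a ring automorphism `σ` of `k`, `Gsigma σ` is the set of all
elements of `k` of the form `r / σ r` with `r ≠ 0`. -/
def Gsigma {k : Type*} [Field k] (σ : k ≃+* k) : Set k :=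
  {y : k | ∃ r : k, r ≠ 0 ∧ y = r / σ r}

open Polynomial in
/-- The product of linear factors. -/
noncomputable def PP {L : Type*} [Field L] (m : L →₀ ℤ) : RatFunc L :=
  m.prod (fun t (n : ℤ) => (RatFunc.X - RatFunc.C t) ^ n)

theorem lin_ne {L : Type*} [Field L] (t : L) : (RatFunc.X - RatFunc.C t : RatFunc L) ≠ 0 := by
  rw [← RatFunc.algebraMap_X, ← RatFunc.algebraMap_C, ← map_sub]
  exact RatFunc.algebraMap_ne_zero (Polynomial.X_sub_C_ne_zero t)

theorem PP_zero {L : Type*} [Field L] : PP (0 : L →₀ ℤ) = 1 := by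
  simp [PP]

theorem PP_add {L : Type*} [Field L] (m n : L →₀ ℤ) : PP (m + n) = PP m * PP n := by
  classical
  unfold PP
  exact Finsupp.prod_add_index' (fun t => zpow_zero _) (fun t i j => zpow_add₀ (lin_ne t) i j)

theorem PP_ne {L : Type*} [Field L] (m : L →₀ ℤ) : PP m ≠ 0 := by
  unfold PP Finsupp.prod
  exact Finset.prod_ne_zero_iff.mpr (fun t _ => zpow_ne_zero _ (lin_ne t))

theorem PP_sub {L : Type*} [Field L] (m n : L →₀ ℤ) : PP (m - n) = PP m / PP n := by
  rw [eq_div_iff (PP_ne n), ← PP_add, sub_add_cancel]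

theorem PP_single {L : Type*} [Field L] (t : L) :
    PP (Finsupp.single t 1) = RatFunc.X - RatFunc.C t := by
  unfold PP
  rw [Finsupp.prod_single_index (zpow_zero _), zpow_one]

theorem exists_poly {L : Type*} [Field L] [IsAlgClosed L] (p : Polynomial L) (hp : p ≠ 0) :
    ∃ (d : L) (n : L →₀ ℤ), d ≠ 0 ∧ algebraMap (Polynomial L) (RatFunc L) p = RatFunc.C d * PP n := by
  have h1 : ∀ S : Multiset L, ∃ n : L →₀ ℤ, algebraMap (Polynomial L) (RatFunc L)
      (S.map (fun t => Polynomial.X - Polynomial.C t)).prod = PP n := by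
    intro S
    induction S using Multiset.induction with
    | empty => exact ⟨0, by simp [PP_zero]⟩
    | cons t S ih =>
      obtain ⟨n, hn⟩ := ih
      refine ⟨Finsupp.single t 1 + n, ?_⟩
      rw [PP_add, PP_single, Multiset.map_cons, Multiset.prod_cons, map_mul, hn, map_sub,
        RatFunc.algebraMap_X, RatFunc.algebraMap_C]
  obtain ⟨n, hn⟩ := h1 p.roots
  refine ⟨p.leadingCoeff, n, Polynomial.leadingCoeff_ne_zero.mpr hp, ?_⟩
  rw [← hn, ← RatFunc.algebraMap_C, ← map_mul, ← (IsAlgClosed.splits p).eq_prod_roots]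

theorem exists_rat {L : Type*} [Field L] [IsAlgClosed L] (r : RatFunc L) (hr : r ≠ 0) :
    ∃ (d : L) (n : L →₀ ℤ), d ≠ 0 ∧ r = RatFunc.C d * PP n := by
  obtain ⟨d, n, hd, h⟩ := exists_poly r.num (RatFunc.num_ne_zero hr)
  obtain ⟨e, k, he, h'⟩ := exists_poly r.denom (RatFunc.denom_ne_zero r)
  refine ⟨d / e, n - k, div_ne_zero hd he, ?_⟩
  rw [PP_sub, map_div₀, ← RatFunc.num_div_denom r, h, h']
  rw [mul_div_mul_comm]

open Polynomial in
theorem uniq {L : Type*} [Field L] (c : L) (m : L →₀ ℤ) (h : RatFunc.C c * PP m = 1) :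
    c = 1 ∧ m = 0 := by
  classical
  let Q : (L → ℕ) → L[X] := fun k => ∏ s ∈ m.support, (X - C s) ^ (k s)
  have hmon : ∀ k, (Q k).Monic := fun k =>
    monic_prod_of_monic _ _ (fun s _ => (monic_X_sub_C s).pow _)
  have hroots : ∀ k t, t ∈ m.support → (Q k).roots.count t = k t := by
    intro k t ht
    simp only [Q]
    rw [roots_prod _ _ (hmon k).ne_zero]
    simp only [roots_pow, roots_X_sub_C]
    rw [Multiset.count_bind]
    simp only [Multiset.count_nsmul, Multiset.count_singleton]
    change ∑ s ∈ m.support, _ = _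
    simp [ht]
  have hA : algebraMap L[X] (RatFunc L) (Q fun s => (m s).toNat) =
      PP m * algebraMap L[X] (RatFunc L) (Q fun s => (- m s).toNat) := by
    simp only [Q, PP, Finsupp.prod, map_prod]
    rw [← Finset.prod_mul_distrib]
    refine Finset.prod_congr rfl fun s _ => ?_
    simp only [map_pow, map_sub, RatFunc.algebraMap_X, RatFunc.algebraMap_C]
    rw [← zpow_natCast, ← zpow_natCast, ← zpow_add₀ (lin_ne s)]
    congr 1
    omega
  have hAB : C c * (Q fun s => (m s).toNat) = Q fun s => (- m s).toNat := by
    apply RatFunc.algebraMap_injective L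
    rw [map_mul, hA, RatFunc.algebraMap_C, ← mul_assoc, h, one_mul]
  have hc : c = 1 := by
    have := congrArg leadingCoeff hAB
    rwa [leadingCoeff_mul, leadingCoeff_C, (hmon _).leadingCoeff, (hmon _).leadingCoeff,
      mul_one] at this
  refine ⟨hc, ?_⟩
  rw [hc, C_1, one_mul] at hAB
  ext t
  by_cases ht : t ∈ m.support
  · have := hroots (fun s => (m s).toNat) t ht
    rw [hAB, hroots _ t ht] at this
    simp only [Finsupp.coe_zero, Pi.zero_apply]
    omega
  · simpa using ht

theorem sigma_PP {L : Type*} [Field L] (a : L)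
    (σ : RatFunc L ≃ₐ[L] RatFunc L) (hσ : σ RatFunc.X = RatFunc.X + RatFunc.C a)
    (n : L →₀ ℤ) : σ (PP n) = PP (n.mapDomain (fun s => s - a)) := by
  unfold PP
  rw [Finsupp.prod_mapDomain_index (fun t => zpow_zero _)
    (fun t i j => zpow_add₀ (lin_ne t) i j), Finsupp.prod, Finsupp.prod, map_prod]
  refine Finset.prod_congr rfl fun s _ => ?_
  have hC : σ (RatFunc.C s) = RatFunc.C s := by
    rw [← RatFunc.algebraMap_eq_C]; exact σ.commutes s
  rw [map_zpow₀, map_sub, hσ, hC, map_sub]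
  congr 1
  ring

/-- Orbit map. -/
abbrev orb {L : Type*} [Field L] (a : L) : L → L ⧸ AddSubgroup.zmultiples a :=
  QuotientAddGroup.mk

theorem orb_eq {L : Type*} [Field L] (a s t : L) : orb a s = orb a t ↔ ∃ i : ℤ, s = t + i • a := by
  rw [eq_comm, QuotientAddGroup.eq, AddSubgroup.mem_zmultiples_iff]
  refine exists_congr fun i => ?_
  constructor <;> intro h
  · rw [h]; ring
  · rw [h]; ring

open Classical in
theorem orbit_sum {L : Type*} [Field L] (a : L) (m : L →₀ ℤ) :
    (∀ t : L, (∑ s ∈ m.support.filter (fun s => ∃ i : ℤ, s = t + i • a), m s) = 0) ↔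
      m.mapDomain (orb a) = 0 := by
  have key : ∀ t : L, m.mapDomain (orb a) (orb a t) =
      ∑ s ∈ m.support.filter (fun s => ∃ i : ℤ, s = t + i • a), m s := by
    intro t
    rw [Finsupp.mapDomain, Finsupp.sum, Finsupp.finsetSum_apply, Finset.sum_filter]
    refine Finset.sum_congr rfl fun s _ => ?_
    rw [Finsupp.single_apply]
    simp only [orb_eq]
  constructor
  · intro h
    ext q
    obtain ⟨t, rfl⟩ := QuotientAddGroup.mk_surjective q
    exact (key t).trans (h t)
  · intro h t
    rw [← key, h]; rfl

/-- `n ↦ n - shift n`. -/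
noncomputable def dif {L : Type*} [Field L] (a : L) : (L →₀ ℤ) →+ (L →₀ ℤ) :=
  AddMonoidHom.id _ - Finsupp.mapDomain.addMonoidHom (fun s => s - a)

theorem dif_apply {L : Type*} [Field L] (a : L) (n : L →₀ ℤ) :
    dif a n = n - n.mapDomain (fun s => s - a) := rfl

theorem orb_dif {L : Type*} [Field L] (a : L) (n : L →₀ ℤ) :
    (dif a n).mapDomain (orb a) = 0 := by
  have h := map_sub (Finsupp.mapDomain.addMonoidHom (M := ℤ) (orb a)) n
    (n.mapDomain (fun s => s - a))
  change (dif a n).mapDomain (orb a) = n.mapDomain (orb a) -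
    (n.mapDomain (fun s => s - a)).mapDomain (orb a) at h
  rw [h, ← Finsupp.mapDomain_comp]
  have : orb a ∘ (fun s => s - a) = orb a := by
    funext s
    exact (orb_eq a _ _).mpr ⟨-1, by simp [sub_eq_add_neg]⟩
  rw [this, sub_self]

theorem single_mem {L : Type*} [Field L] (a t : L) (i : ℤ) :
    Finsupp.single (t + i • a) (1 : ℤ) - Finsupp.single t 1 ∈ (dif a).range := by
  have step : ∀ u : L, Finsupp.single (u + a) (1 : ℤ) - Finsupp.single u 1 ∈ (dif a).range := by
    intro u
    refine ⟨Finsupp.single (u + a) 1, ?_⟩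
    rw [dif_apply, Finsupp.mapDomain_single, add_sub_cancel_right]
  induction i using Int.induction_on with
  | zero => simp
  | succ i ih =>
    have := add_mem (step (t + (i : ℤ) • a)) ih
    rw [sub_add_sub_cancel] at this
    rwa [add_smul, one_smul, ← add_assoc]
  | pred i ih =>
    have := sub_mem ih (step (t + (-(i : ℤ) - 1) • a))
    have e : t + (-(i : ℤ) - 1) • a + a = t + (-(i : ℤ)) • a := by
      rw [sub_smul, one_smul]; ring
    rw [e] at this
    convert this using 1
    abel

theorem mem_range {L : Type*} [Field L] (a : L) (m : L →₀ ℤ) (h : m.mapDomain (orb a) = 0) :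
    m ∈ (dif a).range := by
  have h2 : ∀ n : L →₀ ℤ, n - n.mapDomain (Quotient.out ∘ orb a) ∈ (dif a).range := by
    intro n
    have : n - n.mapDomain (Quotient.out ∘ orb a) =
        ∑ s ∈ n.support, n s • (Finsupp.single s (1 : ℤ) -
          Finsupp.single (Quotient.out (orb a s)) 1) := by
      conv_lhs => lhs; rw [← Finsupp.sum_single n]
      rw [Finsupp.mapDomain, Finsupp.sum, Finsupp.sum, ← Finset.sum_sub_distrib]
      refine Finset.sum_congr rfl fun s _ => ?_
      simp [smul_sub]
    rw [this]
    refine sum_mem fun s _ => zsmul_mem ?_ _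
    obtain ⟨i, hi⟩ := (orb_eq a s (Quotient.out (orb a s))).mp (Quotient.out_eq _).symm
    have := single_mem a (Quotient.out (orb a s)) i
    rwa [← hi] at this
  have := h2 m
  rwa [Finsupp.mapDomain_comp, h, Finsupp.mapDomain_zero, sub_zero] at this

open Classical in
/-- Let `L` be algebraically closed, `a ∈ Lˣ`, and `σ` the automorphism of `L(X)` fixing `L`
with `σ(X) = X + a`.  A nonzero `β ∈ L(X)`, written canonically as
`β = C c · ∏_t (X − t)^{m t}`, belongs to `G_σ` if and only if `c = 1` and
`m ∈ Fsfun_σ(L, ℤ)`, i.e. the sum of the values of `m` over each orbit `{t + i·a : i ∈ ℤ}`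
vanishes. -/
theorem stmt4 {L : Type*} [Field L] [IsAlgClosed L] (a : L) (ha : a ≠ 0)
    (σ : RatFunc L ≃ₐ[L] RatFunc L) (hσ : σ RatFunc.X = RatFunc.X + RatFunc.C a) :
    ∀ (c : Lˣ) (m : L →₀ ℤ),
      (RatFunc.C (c : L) * m.prod (fun t (n : ℤ) => (RatFunc.X - RatFunc.C t) ^ n))
          ∈ Gsigma σ.toRingEquiv ↔
        (c = 1 ∧ ∀ t : L,
          (∑ s ∈ m.support.filter (fun s => ∃ i : ℤ, s = t + i • a), m s) = 0) := by
  intro c m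
  rw [orbit_sum]
  change RatFunc.C (c : L) * PP m ∈ _ ↔ _
  constructor
  · rintro ⟨r, hr, h⟩
    obtain ⟨d, n, hd, rfl⟩ := exists_rat r hr
    have hC : σ (RatFunc.C d) = RatFunc.C d := by
      rw [← RatFunc.algebraMap_eq_C]; exact σ.commutes d
    have hd' : (RatFunc.C d : RatFunc L) ≠ 0 := by simpa using hd
    change _ = _ / σ _ at h
    rw [map_mul, hC, sigma_PP a σ hσ, mul_div_mul_left _ _ hd', ← PP_sub, ← dif_apply] at h
    have h1 : RatFunc.C (c : L) * PP (m - dif a n) = 1 := by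
      rw [PP_sub, ← mul_div_assoc, h, div_self (PP_ne _)]
    obtain ⟨hc, hm⟩ := uniq _ _ h1
    refine ⟨Units.ext hc, ?_⟩
    rw [sub_eq_zero.mp hm, orb_dif]
  · rintro ⟨rfl, h⟩
    obtain ⟨n, rfl⟩ := mem_range a m h
    refine ⟨PP n, PP_ne n, ?_⟩
    change _ = _ / σ _
    rw [sigma_PP a σ hσ, ← PP_sub, ← dif_apply]
    simp
end

section
/- Let k be a field and σ a ring automorphism of k. For u, v ∈ kˣ, there exists a k-linear bijection φ : k → k satisfying φ ∘ T_u = T_v ∘ φ (equivalently, the modules N_u and N_v over the skew Laurent polynomial algebra k[x, x⁻¹, σ] are isomorphic) if and only if v ∈ G_σ · u, i.e. if and only if v/u = r/σ(r) for some nonzero r ∈ k. -/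
/-- For a field `k` with ring automorphism `σ` and `u, v ∈ kˣ`, there is a `k`-linear
bijection `φ : k → k` intertwining `T_u : b ↦ σ(b)·u` and `T_v : b ↦ σ(b)·v` (that is, the
one-dimensional modules `N_u` and `N_v` over `k[x, x⁻¹, σ]` are isomorphic) if and only if
`v/u = r/σ(r)` for some nonzero `r ∈ k`, i.e. `v ∈ G_σ · u`. -/
theorem stmt6 {k : Type*} [Field k] (σ : k ≃+* k) (u v : k) (hu : u ≠ 0) (hv : v ≠ 0) :
    (∃ φ : k ≃ₗ[k] k, ∀ b : k, φ (σ b * u) = σ (φ b) * v) ↔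
    (∃ r : k, r ≠ 0 ∧ v / u = r / σ r) := by
  constructor
  · rintro ⟨φ, h⟩
    have hr : φ 1 ≠ 0 := fun h0 => one_ne_zero (φ.map_eq_zero_iff.mp h0)
    have hs : σ (φ 1) ≠ 0 := fun h0 => hr ((map_eq_zero_iff σ σ.injective).mp h0)
    refine ⟨φ 1, hr, ?_⟩
    have h1 := h 1
    have h2 : φ u = u * φ 1 := by
      have := φ.map_smul u 1
      simpa using this
    rw [map_one, one_mul, h2] at h1
    rw [div_eq_div_iff hu hs]
    linear_combination -h1
  · rintro ⟨r, hr, h⟩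
    have hs : σ r ≠ 0 := fun h0 => hr ((map_eq_zero_iff σ σ.injective).mp h0)
    rw [div_eq_div_iff hu hs] at h
    refine ⟨LinearEquiv.smulOfNeZero k k r hr, fun b => ?_⟩
    simp only [LinearEquiv.smulOfNeZero_apply, smul_eq_mul, map_mul]
    linear_combination -(σ b) * h
end

section
/- Let σ be the ℂ-algebra automorphism of ℂ(X) with σ(X) = X − 2, let θ ∈ ℂ, and let u ∈ ℂ(X) be nonzero. The ℂ-linear operators H, E_u, F_u on ℂ(X) defined by H(b) = X·b, E_u(b) = σ(b)·u, and F_u(b) = ((θ − (X+1)²)/4)·σ⁻¹(b)·σ⁻¹(u)⁻¹ satisfy the sl₂ relations H∘E_u − E_u∘H = 2E_u, H∘F_u − F_u∘H = −2F_u, E_u∘F_u − F_u∘E_u = H, and moreover the Casimir operator (H + 1)² + 4·F_u∘E_u equals θ times the identity operator. -/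
/-- Let `σ` be the `ℂ`-algebra automorphism of `ℂ(X)` with `σ(X) = X - 2`, `θ ∈ ℂ` and
`u ∈ ℂ(X)` nonzero.  The operators `H(b) = X·b`, `E_u(b) = σ(b)·u` and
`F_u(b) = ((θ − (X+1)²)/4)·σ⁻¹(b)·σ⁻¹(u)⁻¹` on `ℂ(X)` satisfy the `sl₂`-relations
`[H, E_u] = 2E_u`, `[H, F_u] = −2F_u`, `[E_u, F_u] = H`, and the Casimir operator
`(H+1)² + 4·F_u∘E_u` is `θ` times the identity. -/
theorem stmt8 (σ : RatFunc ℂ ≃ₐ[ℂ] RatFunc ℂ) (hσ : σ RatFunc.X = RatFunc.X - 2)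
    (θ : ℂ) (u : RatFunc ℂ) (hu : u ≠ 0)
    (H E F : RatFunc ℂ → RatFunc ℂ)
    (hH : ∀ b, H b = RatFunc.X * b)
    (hE : ∀ b, E b = σ b * u)
    (hF : ∀ b, F b = (RatFunc.C θ - (RatFunc.X + 1) ^ 2) / 4 * σ.symm b * (σ.symm u)⁻¹) :
    (∀ b, H (E b) - E (H b) = 2 * E b) ∧
    (∀ b, H (F b) - F (H b) = -2 * F b) ∧
    (∀ b, E (F b) - F (E b) = H b) ∧
    (∀ b, H (H b) + 2 * H b + b + 4 * F (E b) = RatFunc.C θ * b) := by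
  have hs : σ.symm RatFunc.X = RatFunc.X + 2 := by
    rw [AlgEquiv.symm_apply_eq, map_add, hσ, map_ofNat]; ring
  have hC : σ (RatFunc.C θ) = RatFunc.C θ := by
    have h := σ.commutes θ
    rwa [RatFunc.algebraMap_eq_C] at h
  have hu' : σ.symm u ≠ 0 := by simpa using hu
  have : CharZero (RatFunc ℂ) :=
    charZero_of_injective_algebraMap (algebraMap ℂ (RatFunc ℂ)).injective
  have h4 : (4 : RatFunc ℂ) ≠ 0 := by exact_mod_cast (Nat.cast_ne_zero (R := RatFunc ℂ)).2 (by norm_num : (4 : ℕ) ≠ 0)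
  have hEF : ∀ b, E (F b) = (RatFunc.C θ - (RatFunc.X - 1) ^ 2) / 4 * b := by
    intro b
    rw [hE, hF]
    simp only [map_mul, map_div₀, map_sub, map_pow, map_add, map_one, map_inv₀, map_ofNat, hσ, hC,
      AlgEquiv.apply_symm_apply]
    field_simp
    ring
  have hFE : ∀ b, F (E b) = (RatFunc.C θ - (RatFunc.X + 1) ^ 2) / 4 * b := by
    intro b
    rw [hE, hF]
    simp only [map_mul, AlgEquiv.symm_apply_apply]
    field_simp
  refine ⟨fun b => ?_, fun b => ?_, fun b => ?_, fun b => ?_⟩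
  · simp only [hH, hE, map_mul, hσ]; ring
  · simp only [hH, hF, map_mul, hs]; ring
  · rw [hEF, hFE, hH]; field_simp; ring
  · rw [hFE]; simp only [hH]; field_simp; ring
end

section
/- Let θ ∈ ℂ, let r₁, r₂ be the two roots of θ − (X+1)², set ω := 3 + max(Re r₁, Re r₂) and ℂ_ω := {z ∈ ℂ : ω ≤ Re z < ω + 2}. Let c ∈ ℂˣ, let m : ℂ → ℤ be finitely supported with support contained in ℂ_ω, and set u := c·∏_{t ∈ ℂ_ω}(X − t)^{m(t)}. Then every nonzero ℂ-subspace V of ℂ(X) that is closed under multiplication by X and under the operators E_u and F_u contains all of ℂ[X]. (Equivalently, the monic generator f_u of the ideal L_u ∩ ℂ[X] of ℂ[X] equals 1, so ℂ[X] ⊆ L_u, where L_u is the simple socle of the U_θ-module N_u.) -/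
open Polynomial in
theorem stmt9_aux (r₁ r₂ : ℂ) (ω : ℝ) (hω : ω = 3 + max r₁.re r₂.re)
    (P Q : ℂ[X]) (hP : ∀ z, P.IsRoot z → ω ≤ z.re ∧ z.re < ω + 2)
    (hQ : ∀ z, Q.IsRoot z → ω ≤ z.re ∧ z.re < ω + 2)
    (I : Ideal ℂ[X]) (hI : I ≠ ⊥)
    (hE : ∀ p ∈ I, p.comp (X - 2) * P ∈ I)
    (hF : ∀ p ∈ I, (X - C r₁) * (X - C r₂) * (p * Q).comp (X + 2) ∈ I) : I = ⊤ := by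
  obtain ⟨f, rfl⟩ := (IsPrincipalIdealRing.principal I).principal
  have hf0 : f ≠ 0 := by
    rintro rfl
    exact hI (by simp)
  have hfm : f ∈ Submodule.span ℂ[X] {f} := Submodule.mem_span_singleton_self f
  have hroot : ∀ p ∈ Submodule.span ℂ[X] {f}, ∀ z, f.eval z = 0 → p.eval z = 0 := by
    intro p hp z hz
    obtain ⟨q, rfl⟩ := Submodule.mem_span_singleton.1 hp
    simp [hz]
  have h1 : ∀ z, f.eval z = 0 → z.re < ω → f.eval (z - 2) = 0 := by
    intro z hz hlt
    have := hroot _ (hE f hfm) z hz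
    simp only [eval_mul, eval_comp, eval_sub, eval_X, eval_ofNat, mul_eq_zero] at this
    rcases this with h | h
    · exact h
    · exact absurd (hP z h).1 (not_le.2 hlt)
  have h2 : ∀ z, f.eval z = 0 → ω ≤ z.re → f.eval (z + 2) = 0 := by
    intro z hz hle
    have := hroot _ (hF f hfm) z hz
    simp only [eval_mul, eval_comp, eval_sub, eval_add, eval_X, eval_C, eval_ofNat, mul_eq_zero,
      sub_eq_zero] at this
    have m1 := le_max_left r₁.re r₂.re
    have m2 := le_max_right r₁.re r₂.re
    rcases this with (h | h) | h | h
    · subst h; linarith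
    · subst h; linarith
    · exact h
    · have := (hQ _ h).2
      simp at this
      linarith
  by_contra hne
  have hdeg : f.degree ≠ 0 := by
    intro h
    exact hne (Ideal.span_singleton_eq_top.2 (isUnit_iff_degree_eq_zero.2 h))
  obtain ⟨z, hz⟩ := IsAlgClosed.exists_root f hdeg
  have key : ∀ d : ℂ, d ≠ 0 → ¬ ∀ n : ℕ, f.eval (z + n * d) = 0 := by
    intro d hd h
    refine hf0 (eq_zero_of_infinite_isRoot f
      (Set.infinite_of_injective_forall_mem (f := fun n : ℕ => z + n * d) ?_ h))
    intro a b hab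
    simpa [hd] using hab
  rcases lt_or_ge z.re ω with h | h
  · refine key (-2) (by norm_num) fun n => ?_
    induction n with
    | zero => simpa using hz
    | succ k ih =>
      have := h1 _ ih (by
        have : (0:ℝ) ≤ k := k.cast_nonneg
        simp
        linarith)
      convert this using 2
      push_cast; ring
  · refine key 2 (by norm_num) fun n => ?_
    induction n with
    | zero => simpa using hz
    | succ k ih =>
      have := h2 _ ih (by
        have : (0:ℝ) ≤ k := k.cast_nonneg
        simp
        linarith)
      convert this using 2
      push_cast; ring


/-- Let `θ ∈ ℂ`, let `r₁, r₂` be the two roots of `θ − (X+1)²`, let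
`ω := 3 + max (Re r₁) (Re r₂)` and `ℂ_ω := {z : ω ≤ Re z < ω + 2}`.  Let
`u = c·∏_{t ∈ ℂ_ω}(X − t)^{m t}` with `c ≠ 0` and `m` finitely supported with support in
`ℂ_ω`.  Then every nonzero `ℂ`-subspace `V` of `ℂ(X)` closed under multiplication by `X`
and under the operators `E_u(b) = σ(b)·u` and
`F_u(b) = ((θ − (X+1)²)/4)·σ⁻¹(b)·σ⁻¹(u)⁻¹` contains all of `ℂ[X]`. -/
theorem stmt9 (σ : RatFunc ℂ ≃ₐ[ℂ] RatFunc ℂ) (hσ : σ RatFunc.X = RatFunc.X - 2)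
    (θ r₁ r₂ : ℂ)
    (hr : RatFunc.C θ - (RatFunc.X + 1) ^ 2 =
      -((RatFunc.X - RatFunc.C r₁) * (RatFunc.X - RatFunc.C r₂)))
    (ω : ℝ) (hω : ω = 3 + max r₁.re r₂.re)
    (c : ℂ) (hc : c ≠ 0) (m : ℂ →₀ ℤ)
    (hm : ∀ s ∈ m.support, ω ≤ s.re ∧ s.re < ω + 2)
    (u : RatFunc ℂ)
    (hu : u = RatFunc.C c * m.prod (fun t (n : ℤ) => (RatFunc.X - RatFunc.C t) ^ n))
    (V : Submodule ℂ (RatFunc ℂ)) (hV : V ≠ ⊥)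
    (hVX : ∀ b ∈ V, RatFunc.X * b ∈ V)
    (hVE : ∀ b ∈ V, σ b * u ∈ V)
    (hVF : ∀ b ∈ V,
      (RatFunc.C θ - (RatFunc.X + 1) ^ 2) / 4 * σ.symm b * (σ.symm u)⁻¹ ∈ V) :
    ∀ p : Polynomial ℂ, algebraMap (Polynomial ℂ) (RatFunc ℂ) p ∈ V := by
  classical
  set A := algebraMap (Polynomial ℂ) (RatFunc ℂ) with hA
  have hAX : A Polynomial.X = RatFunc.X := RatFunc.algebraMap_X
  have hAC : ∀ a, A (Polynomial.C a) = RatFunc.C a := RatFunc.algebraMap_C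
  have hA2 : A 2 = 2 := map_ofNat A 2
  have hσA : ∀ p : Polynomial ℂ, σ (A p) = A (p.comp (Polynomial.X - 2)) := by
    intro p
    have hσC : ∀ a, σ (RatFunc.C a) = RatFunc.C a := fun a => by
      rw [← RatFunc.algebraMap_eq_C]; exact σ.commutes a
    induction p using Polynomial.induction_on' with
    | add p q hp hq => simp [hp, hq]
    | monomial n a =>
      rw [← Polynomial.C_mul_X_pow_eq_monomial]
      simp [hAX, hAC, hσ, hσC, hA2]
  have hσA' : ∀ p : Polynomial ℂ, σ.symm (A p) = A (p.comp (Polynomial.X + 2)) := by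
    intro p
    rw [AlgEquiv.symm_apply_eq, hσA, Polynomial.comp_assoc]
    simp
  -- closure of V under multiplication by polynomials
  have hVC : ∀ (a : ℂ), ∀ b ∈ V, RatFunc.C a * b ∈ V := by
    intro a b hb
    rw [← RatFunc.smul_eq_C_mul]
    exact V.smul_mem a hb
  have hVp : ∀ (p : Polynomial ℂ), ∀ b ∈ V, A p * b ∈ V := by
    intro p b hb
    induction p using Polynomial.induction_on with
    | C a => rw [hAC]; exact hVC a b hb
    | add p q hp hq => rw [map_add, add_mul]; exact V.add_mem hp hq
    | monomial n a h =>
      have := hVX _ h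
      convert this using 1
      simp only [map_mul, map_pow, hAX]
      ring
  let I : Ideal (Polynomial ℂ) :=
    { carrier := {p | A p ∈ V}
      add_mem' := fun {p q} hp hq => by
        simp only [Set.mem_ofPred_eq, map_add] at *
        exact V.add_mem hp hq
      zero_mem' := by simp
      smul_mem' := fun q p hp => by
        simp only [Set.mem_ofPred_eq, smul_eq_mul, map_mul] at *
        exact hVp q _ hp }
  have hImem : ∀ p, p ∈ I ↔ A p ∈ V := fun p => Iff.rfl
  have hAinj : Function.Injective A := RatFunc.algebraMap_injective ℂ
  have hI : I ≠ ⊥ := by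
    obtain ⟨b, hb, hb0⟩ := V.ne_bot_iff.1 hV
    have hd : A b.denom ≠ 0 := RatFunc.algebraMap_ne_zero b.denom_ne_zero
    have hnum : A b.num = A b.denom * b := by
      have h := RatFunc.num_div_denom b
      rw [← hA, div_eq_iff hd] at h
      rw [h, mul_comm]
    refine (Submodule.ne_bot_iff I).2 ⟨b.num, ?_, RatFunc.num_ne_zero hb0⟩
    rw [hImem, hnum]
    exact hVp _ _ hb
  let P : Polynomial ℂ :=
    Polynomial.C c * ∏ t ∈ m.support, (Polynomial.X - Polynomial.C t) ^ (m t).toNat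
  let Q : Polynomial ℂ := ∏ t ∈ m.support, (Polynomial.X - Polynomial.C t) ^ (-(m t)).toNat
  have hP : ∀ z, P.IsRoot z → ω ≤ z.re ∧ z.re < ω + 2 := by
    intro z hz
    simp only [P, Polynomial.IsRoot, Polynomial.eval_mul, Polynomial.eval_C, mul_eq_zero, hc,
      false_or, Polynomial.eval_prod, Finset.prod_eq_zero_iff] at hz
    obtain ⟨t, ht, h⟩ := hz
    rw [Polynomial.eval_pow] at h
    have h := eq_zero_of_pow_eq_zero h
    simp [sub_eq_zero] at h
    exact h ▸ hm t ht
  have hQ : ∀ z, Q.IsRoot z → ω ≤ z.re ∧ z.re < ω + 2 := by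
    intro z hz
    simp only [Q, Polynomial.IsRoot, Polynomial.eval_prod, Finset.prod_eq_zero_iff] at hz
    obtain ⟨t, ht, h⟩ := hz
    rw [Polynomial.eval_pow] at h
    have h := eq_zero_of_pow_eq_zero h
    simp [sub_eq_zero] at h
    exact h ▸ hm t ht
  have hlin : ∀ t : ℂ, (RatFunc.X - RatFunc.C t : RatFunc ℂ) ≠ 0 := by
    intro t
    rw [← hAX, ← hAC, ← map_sub]
    exact RatFunc.algebraMap_ne_zero (Polynomial.X_sub_C_ne_zero t)
  have huQ : u * A Q = A P := by
    simp only [hu, P, Q, map_mul, map_prod, map_pow, map_sub, hAX, hAC, Finsupp.prod]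
    rw [mul_assoc, ← Finset.prod_mul_distrib]
    congr 1
    refine Finset.prod_congr rfl fun t _ => ?_
    rw [← zpow_natCast, ← zpow_natCast, ← zpow_add₀ (hlin t)]
    congr 1
    omega
  have hP0 : P ≠ 0 := by
    refine mul_ne_zero (by simpa using hc) (Finset.prod_ne_zero_iff.2 fun t _ => ?_)
    exact pow_ne_zero _ (Polynomial.X_sub_C_ne_zero t)
  have hAP0 : A P ≠ 0 := RatFunc.algebraMap_ne_zero hP0
  have hu0 : u ≠ 0 := by
    rintro rfl
    rw [zero_mul] at huQ
    exact hAP0 huQ.symm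
  have htop : I = ⊤ := by
    refine stmt9_aux r₁ r₂ ω hω P Q hP hQ I hI ?_ ?_
    · intro p hp
      rw [hImem] at *
      have := hVp Q _ (hVE _ hp)
      convert this using 1
      rw [hσA, map_mul, ← huQ]
      ring
    · intro p hp
      rw [hImem] at *
      have h4 := hVp (P.comp (Polynomial.X + 2)) _ (hVF _ hp)
      have h5 := hVC (-4) _ h4
      convert h5 using 1
      have hsu : σ.symm u ≠ 0 := by simpa using hu0
      have e4 : (RatFunc.C (-4 : ℂ) : RatFunc ℂ) = -4 := by
        rw [map_neg]; congr 1; exact map_ofNat _ 4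
      rw [hr, e4, ← hσA', ← huQ, map_mul, map_mul, map_mul, map_sub, map_sub, hAX, hAC, hAC,
        ← hσA', map_mul, map_mul]
      field_simp
  intro p
  rw [← hImem, htop]
  trivial
end

section
/- Let θ ∈ ℂ with roots r₁, r₂ of θ − (X+1)², ω := 3 + max(Re r₁, Re r₂), c ∈ ℂˣ, m : ℂ → ℤ finitely supported with support in ℂ_ω, and u := c·∏_{t ∈ ℂ_ω}(X − t)^{m(t)}. Then the subspace K_u of ℂ(X) is invariant under multiplication by X and under E_u and F_u, and every nonzero ℂ-subspace of ℂ(X) invariant under these operators contains K_u; in particular K_u is the unique simple submodule of ℂ(X) for this sl₂-action, i.e. K_u = L_u. -/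
noncomputable section

open Classical in
/-- The number of indices `j ∈ {1, 2}` with `r_j ∈ {s − 4, s − 6, …, s − 2i}`. -/
def rootCount (r₁ r₂ s : ℂ) (i : ℕ) : ℤ :=
  (if ∃ l : ℕ, 2 ≤ l ∧ l ≤ i ∧ r₁ = s - 2 * (l : ℂ) then 1 else 0) +
  (if ∃ l : ℕ, 2 ≤ l ∧ l ≤ i ∧ r₂ = s - 2 * (l : ℂ) then 1 else 0)

/-- The spanning set of the subspace `K_u` of `ℂ(X)`:  (i) `ℂ[X]`;
(ii) `1/(X − s − 2i)^k` for `s` with `m s < 0`, `i ≥ 0`, `1 ≤ k ≤ −m s`;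
(iii) `1/(X − s + 2i)^k` for `s` with `m s > 0`, `i > 0`,
`1 ≤ k ≤ m s − #{j ∈ {1,2} : r_j ∈ {s−4, …, s−2i}}`. -/
def Kgen (r₁ r₂ : ℂ) (m : ℂ →₀ ℤ) : Set (RatFunc ℂ) :=
  {x | ∃ p : Polynomial ℂ, x = algebraMap (Polynomial ℂ) (RatFunc ℂ) p} ∪
  {x | ∃ s : ℂ, m s < 0 ∧ ∃ i k : ℕ, 1 ≤ k ∧ (k : ℤ) ≤ -m s ∧
    x = ((RatFunc.X - RatFunc.C (s + 2 * (i : ℂ))) ^ k)⁻¹} ∪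
  {x | ∃ s : ℂ, 0 < m s ∧ ∃ i k : ℕ, 0 < i ∧ 1 ≤ k ∧
    (k : ℤ) ≤ m s - rootCount r₁ r₂ s i ∧
    x = ((RatFunc.X - RatFunc.C (s - 2 * (i : ℂ))) ^ k)⁻¹}

open Polynomial in
/-- exact order `n` at `z` -/
def Ex (z : ℂ) (n : ℤ) (b : RatFunc ℂ) : Prop :=
  ∃ g h : ℂ[X], g.eval z ≠ 0 ∧ h.eval z ≠ 0 ∧
    b * algebraMap ℂ[X] (RatFunc ℂ) h =
      algebraMap ℂ[X] (RatFunc ℂ) g * (RatFunc.X - RatFunc.C z) ^ n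

open Polynomial in
/-- order at least `n` at `z` -/
def Lo (z : ℂ) (n : ℤ) (b : RatFunc ℂ) : Prop :=
  ∃ g h : ℂ[X], h.eval z ≠ 0 ∧
    b * algebraMap ℂ[X] (RatFunc ℂ) h =
      algebraMap ℂ[X] (RatFunc ℂ) g * (RatFunc.X - RatFunc.C z) ^ n

lemma alg_XC (z : ℂ) : algebraMap (Polynomial ℂ) (RatFunc ℂ) (Polynomial.X - Polynomial.C z) =
    RatFunc.X - RatFunc.C z := by
  simp

lemma XC_ne (z : ℂ) : (RatFunc.X - RatFunc.C z : RatFunc ℂ) ≠ 0 := by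
  rw [← alg_XC]
  exact RatFunc.algebraMap_ne_zero (Polynomial.X_sub_C_ne_zero z)

lemma Ex.lo {z n b} (h : Ex z n b) : Lo z n b := by
  obtain ⟨g, h, _, h2, h3⟩ := h
  exact ⟨g, h, h2, h3⟩

lemma Ex.mul {z n b n' b'} (h : Ex z n b) (h' : Ex z n' b') : Ex z (n + n') (b * b') := by
  obtain ⟨g, h, h1, h2, h3⟩ := h
  obtain ⟨g', h', h1', h2', h3'⟩ := h'
  refine ⟨g * g', h * h', by simp [h1, h1'], by simp [h2, h2'], ?_⟩
  rw [map_mul, map_mul, zpow_add₀ (XC_ne z)]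
  linear_combination (b' * algebraMap (Polynomial ℂ) (RatFunc ℂ) h') * h3 +
    (algebraMap (Polynomial ℂ) (RatFunc ℂ) g * (RatFunc.X - RatFunc.C z) ^ n) * h3'

lemma Lo.mul {z n b n' b'} (h : Lo z n b) (h' : Lo z n' b') : Lo z (n + n') (b * b') := by
  obtain ⟨g, h, h2, h3⟩ := h
  obtain ⟨g', h', h2', h3'⟩ := h'
  refine ⟨g * g', h * h', by simp [h2, h2'], ?_⟩
  rw [map_mul, map_mul, zpow_add₀ (XC_ne z)]
  linear_combination (b' * algebraMap (Polynomial ℂ) (RatFunc ℂ) h') * h3 +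
    (algebraMap (Polynomial ℂ) (RatFunc ℂ) g * (RatFunc.X - RatFunc.C z) ^ n) * h3'

lemma Ex.inv {z n b} (h : Ex z n b) : Ex z (-n) b⁻¹ := by
  obtain ⟨g, h, h1, h2, h3⟩ := h
  have hg : algebraMap (Polynomial ℂ) (RatFunc ℂ) g ≠ 0 :=
    RatFunc.algebraMap_ne_zero (by rintro rfl; simp at h1)
  have hh : algebraMap (Polynomial ℂ) (RatFunc ℂ) h ≠ 0 :=
    RatFunc.algebraMap_ne_zero (by rintro rfl; simp at h2)
  have ht := zpow_ne_zero n (XC_ne z)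
  have hb : b ≠ 0 := by
    rintro rfl
    rw [zero_mul] at h3
    exact mul_ne_zero hg ht h3.symm
  refine ⟨h, g, h2, h1, ?_⟩
  rw [zpow_neg]
  field_simp
  linear_combination -h3

lemma Ex.zpow {z n b} (h : Ex z n b) (k : ℤ) : Ex z (k * n) (b ^ k) := by
  have hn : ∀ k : ℕ, Ex z (k * n) (b ^ k) := by
    intro k
    induction k with
    | zero => exact ⟨1, 1, by simp, by simp, by simp⟩
    | succ k ih =>
      rw [pow_succ]
      have := ih.mul h
      convert this using 1
      push_cast; ring
  obtain ⟨k, rfl | rfl⟩ := k.eq_nat_or_neg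
  · simpa using hn k
  · have := (hn k).inv
    simpa using this

lemma Ex.poly {z : ℂ} {p : Polynomial ℂ} (h : p.eval z ≠ 0) :
    Ex z 0 (algebraMap (Polynomial ℂ) (RatFunc ℂ) p) :=
  ⟨p, 1, h, by simp, by simp⟩

lemma Lo.poly (z : ℂ) (p : Polynomial ℂ) :
    Lo z 0 (algebraMap (Polynomial ℂ) (RatFunc ℂ) p) :=
  ⟨p, 1, by simp, by simp⟩

lemma Ex.one (z : ℂ) : Ex z 0 1 := ⟨1, 1, by simp, by simp, by simp⟩

lemma Ex.const (z : ℂ) {c : ℂ} (hc : c ≠ 0) : Ex z 0 (RatFunc.C c) := by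
  have := Ex.poly (z := z) (p := Polynomial.C c) (by simpa using hc)
  simpa using this

open Classical in
lemma Ex.lin (z r : ℂ) : Ex z (if z = r then 1 else 0) (RatFunc.X - RatFunc.C r) := by
  split_ifs with h
  · subst h
    exact ⟨1, 1, by simp, by simp, by simp⟩
  · rw [← alg_XC]
    exact Ex.poly (by simpa [sub_eq_zero] using h)

lemma Lo.mono {z n n' b} (h : Lo z n b) (hn : n' ≤ n) : Lo z n' b := by
  obtain ⟨g, h, h2, h3⟩ := h
  obtain ⟨k, rfl⟩ := Int.le.dest hn
  refine ⟨g * (Polynomial.X - Polynomial.C z) ^ k, h, h2, ?_⟩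
  rw [h3, map_mul, map_pow, alg_XC, zpow_add₀ (XC_ne z), zpow_natCast]
  ring

lemma Lo.add {z n b b'} (h : Lo z n b) (h' : Lo z n b') : Lo z n (b + b') := by
  obtain ⟨g, h, h2, h3⟩ := h
  obtain ⟨g', h', h2', h3'⟩ := h'
  refine ⟨g * h' + g' * h, h * h', by simp [h2, h2'], ?_⟩
  rw [map_add, map_mul, map_mul, map_mul]
  linear_combination (algebraMap (Polynomial ℂ) (RatFunc ℂ) h') * h3 +
    (algebraMap (Polynomial ℂ) (RatFunc ℂ) h) * h3'

lemma Lo.zero (z n) : Lo z n 0 := ⟨0, 1, by simp, by simp⟩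

lemma Lo.smul {z n b} (a : ℂ) (h : Lo z n b) : Lo z n (a • b) := by
  have := (Lo.poly z (Polynomial.C a)).mul h
  rw [zero_add] at this
  rwa [RatFunc.algebraMap_C, ← RatFunc.smul_eq_C_mul] at this

lemma alg_aeval (p : Polynomial ℂ) :
    algebraMap (Polynomial ℂ) (RatFunc ℂ) p = Polynomial.aeval (RatFunc.X : RatFunc ℂ) p := by
  rw [← RatFunc.algebraMap_X, Polynomial.aeval_algebraMap_apply]
  simp

lemma tau_alg (τ : RatFunc ℂ ≃ₐ[ℂ] RatFunc ℂ) (a : ℂ) (hτ : τ RatFunc.X = RatFunc.X - RatFunc.C a)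
    (p : Polynomial ℂ) : τ (algebraMap (Polynomial ℂ) (RatFunc ℂ) p) =
      algebraMap (Polynomial ℂ) (RatFunc ℂ) (p.comp (Polynomial.X - Polynomial.C a)) := by
  rw [alg_aeval, alg_aeval, Polynomial.aeval_comp, ← alg_aeval (Polynomial.X - _), alg_XC, ← hτ,
    Polynomial.aeval_algHom_apply τ]

lemma tau_C (τ : RatFunc ℂ ≃ₐ[ℂ] RatFunc ℂ) (a : ℂ) : τ (RatFunc.C a) = RatFunc.C a := by
  have := τ.commutes a
  rwa [RatFunc.algebraMap_eq_C] at this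

lemma Ex.shift {z n b} (h : Ex z n b) (τ : RatFunc ℂ ≃ₐ[ℂ] RatFunc ℂ) (a : ℂ)
    (hτ : τ RatFunc.X = RatFunc.X - RatFunc.C a) : Ex (z + a) n (τ b) := by
  obtain ⟨g, h, h1, h2, h3⟩ := h
  refine ⟨g.comp (Polynomial.X - Polynomial.C a), h.comp (Polynomial.X - Polynomial.C a),
    by simpa using h1, by simpa using h2, ?_⟩
  have := congrArg τ h3
  rw [map_mul, map_mul, tau_alg τ a hτ, tau_alg τ a hτ, map_zpow₀, map_sub, hτ, tau_C] at this
  rw [this, map_add]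
  congr 2
  ring

lemma Lo.shift {z n b} (h : Lo z n b) (τ : RatFunc ℂ ≃ₐ[ℂ] RatFunc ℂ) (a : ℂ)
    (hτ : τ RatFunc.X = RatFunc.X - RatFunc.C a) : Lo (z + a) n (τ b) := by
  obtain ⟨g, h, h2, h3⟩ := h
  refine ⟨g.comp (Polynomial.X - Polynomial.C a), h.comp (Polynomial.X - Polynomial.C a),
    by simpa using h2, ?_⟩
  have := congrArg τ h3
  rw [map_mul, map_mul, tau_alg τ a hτ, tau_alg τ a hτ, map_zpow₀, map_sub, hτ, tau_C] at this
  rw [this, map_add]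
  congr 2
  ring

lemma poly_mul_mem (V : Submodule ℂ (RatFunc ℂ)) (hX : ∀ b ∈ V, RatFunc.X * b ∈ V)
    (p : Polynomial ℂ) : ∀ b ∈ V, algebraMap (Polynomial ℂ) (RatFunc ℂ) p * b ∈ V := by
  induction p using Polynomial.induction_on with
  | C a =>
    intro b hb
    rw [RatFunc.algebraMap_C, ← RatFunc.smul_eq_C_mul]
    exact V.smul_mem _ hb
  | add p q hp hq =>
    intro b hb
    rw [map_add, add_mul]
    exact V.add_mem (hp b hb) (hq b hb)
  | monomial n a ih =>
    intro b hb
    have := ih _ (hX b hb)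
    rw [pow_succ, ← mul_assoc, map_mul, RatFunc.algebraMap_X, mul_assoc]
    exact this

lemma mem_of_local (V : Submodule ℂ (RatFunc ℂ)) (hX : ∀ b ∈ V, RatFunc.X * b ∈ V)
    (x : RatFunc ℂ) (h : ∀ z, ∃ b ∈ V, ∃ n, Ex z n b ∧ Lo z n x) : x ∈ V := by
  let I : Ideal (Polynomial ℂ) :=
    { carrier := {p | algebraMap (Polynomial ℂ) (RatFunc ℂ) p * x ∈ V}
      add_mem' := by
        intro a b ha hb
        simp only [Set.mem_ofPred_eq] at *
        rw [map_add, add_mul]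
        exact V.add_mem ha hb
      zero_mem' := by simp
      smul_mem' := by
        intro c p hp
        simp only [Set.mem_ofPred_eq] at *
        rw [smul_eq_mul, map_mul, mul_assoc]
        exact poly_mul_mem V hX c _ hp }
  have hI : I = ⊤ := by
    by_contra hne
    obtain ⟨q, hq⟩ := (IsPrincipalIdealRing.principal I).principal
    have hroot : ∃ z, q.eval z = 0 := by
      by_contra hno
      push Not at hno
      apply hne
      rw [hq]
      apply Ideal.span_singleton_eq_top.2
      by_contra hu
      have hd : q.degree ≠ 0 := by
        intro hd
        exact hu (Polynomial.isUnit_iff_degree_eq_zero.2 hd)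
      obtain ⟨z, hz⟩ := IsAlgClosed.exists_root q hd
      exact hno z hz
    obtain ⟨z, hz⟩ := hroot
    obtain ⟨b, hb, n, ⟨g, k, h1, h2, h3⟩, ⟨g', k', h2', h3'⟩⟩ := h z
    have hmem : k' * g ∈ I := by
      change algebraMap (Polynomial ℂ) (RatFunc ℂ) (k' * g) * x ∈ V
      have : algebraMap (Polynomial ℂ) (RatFunc ℂ) (k' * g) * x =
          algebraMap (Polynomial ℂ) (RatFunc ℂ) (g' * k) * b := by
        rw [map_mul, map_mul]
        linear_combination (algebraMap (Polynomial ℂ) (RatFunc ℂ) g) * h3' -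
          (algebraMap (Polynomial ℂ) (RatFunc ℂ) g') * h3
      rw [this]
      exact poly_mul_mem V hX _ _ hb
    rw [hq] at hmem
    obtain ⟨a, ha⟩ := Ideal.mem_span_singleton'.1 hmem
    have := congrArg (Polynomial.eval z) ha
    simp [hz, h1, h2'] at this
  have : (1 : Polynomial ℂ) ∈ I := by rw [hI]; trivial
  change algebraMap (Polynomial ℂ) (RatFunc ℂ) 1 * x ∈ V at this
  simpa using this

/-- away from finitely many points a nonzero rational function has order zero -/
lemma Ex.generic (b : RatFunc ℂ) (hb : b ≠ 0) : ∃ S : Finset ℂ, ∀ z ∉ S, Ex z 0 b := by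
  classical
  refine ⟨b.num.roots.toFinset ∪ b.denom.roots.toFinset, ?_⟩
  intro z hz
  have hn := RatFunc.num_ne_zero hb
  have hd := RatFunc.denom_ne_zero b
  simp [hn, hd] at hz
  refine ⟨b.num, b.denom, hz.1, hz.2, ?_⟩
  rw [zpow_zero, mul_one]
  have h := RatFunc.num_div_denom b
  rw [div_eq_iff (RatFunc.algebraMap_ne_zero hd)] at h
  exact h.symm

open Classical in
def SS (m : ℂ →₀ ℤ) (z : ℂ) : ℤ := ∑ s ∈ m.support, if ∃ i : ℕ, z = s + 2 * i then m s else 0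

open Classical in
def T0 (m : ℂ →₀ ℤ) (z : ℂ) : ℤ :=
  ∑ s ∈ m.support, if ∃ i : ℕ, z = s - 2 * (i + 1) then m s else 0

open Classical in
def RR (r z : ℂ) : ℤ := if ∃ l : ℕ, r = z + 2 * l then 1 else 0

def TT (r₁ r₂ : ℂ) (m : ℂ →₀ ℤ) (z : ℂ) : ℤ := T0 m z - RR r₁ z - RR r₂ z

open Classical in
lemma m_eq_sum (m : ℂ →₀ ℤ) (z : ℂ) : m z = ∑ s ∈ m.support, if z = s then m s else 0 := by
  rw [Finset.sum_ite_eq]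
  simp

lemma SS_rec (m : ℂ →₀ ℤ) (z : ℂ) : SS m (z + 2) = SS m z + m (z + 2) := by
  classical
  rw [m_eq_sum m (z + 2), SS, SS, ← Finset.sum_add_distrib]
  refine Finset.sum_congr rfl fun s _ => ?_
  by_cases h1 : ∃ i : ℕ, z = s + 2 * i
  · obtain ⟨i, rfl⟩ := h1
    have h2 : s + 2 * (i : ℂ) + 2 ≠ s := by
      intro h
      have : ((2 * i + 2 : ℕ) : ℂ) = 0 := by push_cast; linear_combination h
      have := Nat.cast_eq_zero.1 this
      omega
    rw [if_pos ⟨i + 1, by push_cast; ring⟩, if_pos ⟨i, rfl⟩, if_neg h2, add_zero]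
  · rw [if_neg h1]
    by_cases h2 : z + 2 = s
    · rw [if_pos ⟨0, by simp [h2]⟩, if_pos h2, zero_add]
    · rw [if_neg, if_neg h2, zero_add]
      rintro ⟨i, hi⟩
      cases i with
      | zero => exact h2 (by simpa using hi)
      | succ i => exact h1 ⟨i, by push_cast at hi; linear_combination hi⟩

lemma T0_rec (m : ℂ →₀ ℤ) (z : ℂ) : T0 m z = T0 m (z + 2) + m (z + 2) := by
  classical
  rw [m_eq_sum m (z + 2), T0, T0, ← Finset.sum_add_distrib]
  refine Finset.sum_congr rfl fun s _ => ?_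
  by_cases h1 : ∃ i : ℕ, z + 2 = s - 2 * (i + 1)
  · obtain ⟨i, hi⟩ := h1
    have h2 : z + 2 ≠ s := by
      intro h
      have : ((2 * i + 2 : ℕ) : ℂ) = 0 := by push_cast; linear_combination hi - h
      have := Nat.cast_eq_zero.1 this
      omega
    rw [if_pos ⟨i + 1, by push_cast; linear_combination hi⟩, if_pos ⟨i, hi⟩, if_neg h2, add_zero]
  · rw [if_neg h1]
    by_cases h2 : z + 2 = s
    · rw [if_pos ⟨0, by rw [← h2]; push_cast; ring⟩, if_pos h2, zero_add]
    · rw [if_neg, if_neg h2, zero_add]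
      rintro ⟨i, hi⟩
      cases i with
      | zero => exact h2 (by push_cast at hi; linear_combination hi)
      | succ i => exact h1 ⟨i, by push_cast at hi; linear_combination hi⟩

open Classical in
lemma RR_rec (r z : ℂ) : RR r z = RR r (z + 2) + if z = r then 1 else 0 := by
  unfold RR
  by_cases h1 : ∃ i : ℕ, r = z + 2 + 2 * i
  · obtain ⟨i, hi⟩ := h1
    have h2 : z ≠ r := by
      intro h
      have : ((2 * i + 2 : ℕ) : ℂ) = 0 := by push_cast; linear_combination -hi - h
      have := Nat.cast_eq_zero.1 this
      omega
    rw [if_pos ⟨i + 1, by push_cast; linear_combination hi⟩, if_pos ⟨i, hi⟩, if_neg h2, add_zero]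
  · rw [if_neg h1]
    by_cases h2 : z = r
    · rw [if_pos ⟨0, by simp [h2]⟩, if_pos h2, zero_add]
    · rw [if_neg, if_neg h2, zero_add]
      rintro ⟨i, hi⟩
      cases i with
      | zero => exact h2 (by simpa using hi.symm)
      | succ i => exact h1 ⟨i, by push_cast at hi; linear_combination hi⟩

open Classical in
lemma TT_rec (r₁ r₂ : ℂ) (m : ℂ →₀ ℤ) (z : ℂ) : TT r₁ r₂ m z = TT r₁ r₂ m (z + 2) + m (z + 2)
    - (if z = r₁ then 1 else 0) - (if z = r₂ then 1 else 0) := by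
  unfold TT
  rw [T0_rec m z, RR_rec r₁ z, RR_rec r₂ z]
  ring

lemma SS_zero (m : ℂ →₀ ℤ) (z : ℂ) (h : ∀ s ∈ m.support, z.re < s.re) : SS m z = 0 := by
  classical
  refine Finset.sum_eq_zero fun s hs => if_neg ?_
  rintro ⟨i, rfl⟩
  have := h s hs
  simp at this
  have h2 : (0 : ℝ) ≤ i := Nat.cast_nonneg i
  linarith

lemma T0_zero (m : ℂ →₀ ℤ) (z : ℂ) (h : ∀ s ∈ m.support, s.re - 2 < z.re) : T0 m z = 0 := by
  classical
  refine Finset.sum_eq_zero fun s hs => if_neg ?_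
  rintro ⟨i, rfl⟩
  have := h s hs
  simp at this
  have h2 : (0 : ℝ) ≤ i := Nat.cast_nonneg i
  linarith

lemma RR_zero (r z : ℂ) (h : r.re < z.re) : RR r z = 0 := by
  classical
  refine if_neg ?_
  rintro ⟨i, rfl⟩
  simp at h
  have h2 : (0 : ℝ) ≤ i := Nat.cast_nonneg i
  linarith

section strip

variable {r₁ r₂ : ℂ} {ω : ℝ} {m : ℂ →₀ ℤ}

/-- uniqueness in the strip -/
lemma strip_unique (hm : ∀ s ∈ m.support, ω ≤ s.re ∧ s.re < ω + 2) {s t : ℂ} (hs : s ∈ m.support)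
    (ht : t ∈ m.support) (i : ℤ) (h : t = s + 2 * i) : t = s := by
  have h1 := hm s hs
  have h2 := hm t ht
  have h3 : t.re = s.re + 2 * i := by rw [h]; simp
  have h4 : (i : ℝ) < 1 := by linarith
  have h5 : (-1 : ℝ) < i := by linarith
  have h6 : i < 1 := by exact_mod_cast h4
  have h7 : -1 < i := by exact_mod_cast h5
  have : i = 0 := by omega
  simp [h, this]

lemma SS_up (hm : ∀ s ∈ m.support, ω ≤ s.re ∧ s.re < ω + 2) {s : ℂ} (hs : s ∈ m.support)
    (i : ℕ) : SS m (s + 2 * i) = m s := by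
  classical
  unfold SS
  rw [Finset.sum_eq_single s]
  · exact if_pos ⟨i, rfl⟩
  · intro t ht hne
    refine if_neg ?_
    rintro ⟨j, hj⟩
    exact hne (strip_unique hm hs ht (i - j) (by push_cast; linear_combination -hj))
  · intro h; exact absurd hs h

lemma T0_down (hm : ∀ s ∈ m.support, ω ≤ s.re ∧ s.re < ω + 2) {s : ℂ} (hs : s ∈ m.support)
    (i : ℕ) : T0 m (s - 2 * (i + 1)) = m s := by
  classical
  unfold T0
  rw [Finset.sum_eq_single s]
  · exact if_pos ⟨i, rfl⟩
  · intro t ht hne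
    refine if_neg ?_
    rintro ⟨j, hj⟩
    exact hne (strip_unique hm hs ht (j - i) (by push_cast; linear_combination -hj))
  · intro h; exact absurd hs h

lemma TT_up (hω : ω = 3 + max r₁.re r₂.re)
    (hm : ∀ s ∈ m.support, ω ≤ s.re ∧ s.re < ω + 2) {s : ℂ} (hs : s ∈ m.support)
    (i : ℕ) : TT r₁ r₂ m (s + 2 * i) = 0 := by
  have h1 := hm s hs
  have h2 : (0 : ℝ) ≤ i := Nat.cast_nonneg i
  have h3 : (s + 2 * (i : ℂ)).re = s.re + 2 * i := by simp
  have h4 := le_max_left r₁.re r₂.re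
  have h5 := le_max_right r₁.re r₂.re
  unfold TT
  rw [T0_zero, RR_zero, RR_zero]
  · simp
  · rw [h3]; linarith
  · rw [h3]; linarith
  · intro t ht
    have := hm t ht
    rw [h3]; linarith

lemma SS_down (hm : ∀ s ∈ m.support, ω ≤ s.re ∧ s.re < ω + 2) {s : ℂ} (hs : s ∈ m.support)
    (i : ℕ) : SS m (s - 2 * (i + 1)) = 0 := by
  have h1 := hm s hs
  have h2 : (0 : ℝ) ≤ i := Nat.cast_nonneg i
  have h3 : (s - 2 * ((i : ℂ) + 1)).re = s.re - 2 * (i + 1) := by simp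
  refine SS_zero m _ ?_
  intro t ht
  have := hm t ht
  rw [h3]; linarith

lemma RR_down {r s : ℂ} (h : r.re + 3 ≤ s.re) (i : ℕ) :
    (∃ l : ℕ, r = s - 2 * (i + 1) + 2 * l) ↔
      ∃ l : ℕ, 2 ≤ l ∧ l ≤ i + 1 ∧ r = s - 2 * (l : ℂ) := by
  constructor
  · rintro ⟨l, hl⟩
    have h3 : r.re = s.re - 2 * (i + 1) + 2 * l := by rw [hl]; simp
    have h4 : (l : ℝ) < i := by linarith
    have h5 : l < i := by exact_mod_cast h4
    obtain ⟨d, rfl⟩ := Nat.exists_eq_add_of_lt h5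
    refine ⟨d + 2, by omega, by omega, ?_⟩
    rw [hl]; push_cast; ring
  · rintro ⟨l, h1, h2, h3⟩
    obtain ⟨d, hd⟩ := Nat.exists_eq_add_of_le h2
    refine ⟨d, ?_⟩
    have : (i : ℂ) + 1 = l + d := by exact_mod_cast hd
    rw [this, h3]; ring

lemma TT_down (hω : ω = 3 + max r₁.re r₂.re)
    (hm : ∀ s ∈ m.support, ω ≤ s.re ∧ s.re < ω + 2) {s : ℂ} (hs : s ∈ m.support)
    (i : ℕ) : TT r₁ r₂ m (s - 2 * (i + 1)) = m s - rootCount r₁ r₂ s (i + 1) := by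
  classical
  have h1 := hm s hs
  have h4 := le_max_left r₁.re r₂.re
  have h5 := le_max_right r₁.re r₂.re
  unfold TT rootCount RR
  rw [T0_down hm hs i]
  simp only [RR_down (show r₁.re + 3 ≤ s.re by linarith) i,
    RR_down (show r₂.re + 3 ≤ s.re by linarith) i]
  ring

lemma cases3 (m : ℂ →₀ ℤ) (z : ℂ) : (SS m z = 0 ∧ T0 m z = 0) ∨
    (∃ s ∈ m.support, ∃ i : ℕ, z = s + 2 * i) ∨
    (∃ s ∈ m.support, ∃ i : ℕ, z = s - 2 * (i + 1)) := by
  classical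
  by_cases h1 : ∃ s ∈ m.support, ∃ i : ℕ, z = s + 2 * i
  · exact Or.inr (Or.inl h1)
  by_cases h2 : ∃ s ∈ m.support, ∃ i : ℕ, z = s - 2 * (i + 1)
  · exact Or.inr (Or.inr h2)
  left
  exact ⟨Finset.sum_eq_zero fun s hs => if_neg fun h => h1 ⟨s, hs, h⟩,
    Finset.sum_eq_zero fun s hs => if_neg fun h => h2 ⟨s, hs, h⟩⟩

lemma RR_nonneg (r z : ℂ) : 0 ≤ RR r z := by
  unfold RR; split_ifs <;> simp

/-- allowed order -/
def MM (r₁ r₂ : ℂ) (m : ℂ →₀ ℤ) (z : ℂ) : ℤ := min 0 (min (SS m z) (-TT r₁ r₂ m z))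

lemma SS_or_TT (hω : ω = 3 + max r₁.re r₂.re)
    (hm : ∀ s ∈ m.support, ω ≤ s.re ∧ s.re < ω + 2) (z : ℂ) :
    SS m z = 0 ∨ TT r₁ r₂ m z = 0 := by
  rcases cases3 m z with h | ⟨s, hs, i, rfl⟩ | ⟨s, hs, i, rfl⟩
  · exact Or.inl h.1
  · exact Or.inr (TT_up hω hm hs i)
  · exact Or.inl (SS_down hm hs i)

lemma MM_E (hω : ω = 3 + max r₁.re r₂.re)
    (hm : ∀ s ∈ m.support, ω ≤ s.re ∧ s.re < ω + 2) (z : ℂ) :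
    MM r₁ r₂ m (z + 2) ≤ MM r₁ r₂ m z + m (z + 2) := by
  classical
  have h1 := SS_rec m z
  have h2 := TT_rec r₁ r₂ m z
  have h3 : m (z + 2) ≠ 0 → SS m z = 0 := by
    intro h
    have := SS_down hm (Finsupp.mem_support_iff.2 h) 0
    convert this using 2
    push_cast; ring
  unfold MM
  by_cases h : m (z + 2) = 0
  · split_ifs at h2 <;> omega
  · have := h3 h
    split_ifs at h2 <;> omega

open Classical in
lemma MM_F (hω : ω = 3 + max r₁.re r₂.re)
    (hm : ∀ s ∈ m.support, ω ≤ s.re ∧ s.re < ω + 2) (z : ℂ) :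
    MM r₁ r₂ m z ≤ MM r₁ r₂ m (z + 2) - m (z + 2)
      + (if z = r₁ then 1 else 0) + (if z = r₂ then 1 else 0) := by
  have h1 := SS_rec m z
  have h2 := TT_rec r₁ r₂ m z
  have h3 : m (z + 2) ≠ 0 → TT r₁ r₂ m (z + 2) = 0 := by
    intro h
    have := TT_up hω hm (Finsupp.mem_support_iff.2 h) 0
    simpa using this
  unfold MM
  by_cases h : m (z + 2) = 0
  · split_ifs at h2 ⊢ <;> omega
  · have := h3 h
    split_ifs at h2 ⊢ <;> omega

lemma Ex_inv_pow (z : ℂ) (k : ℕ) : Ex z (-k) ((RatFunc.X - RatFunc.C z) ^ k)⁻¹ := by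
  have := ((Ex.lin z z).zpow k).inv
  simpa using this

lemma Ex_inv_pow_ne (z w : ℂ) (h : z ≠ w) (k : ℕ) :
    Ex z 0 ((RatFunc.X - RatFunc.C w) ^ k)⁻¹ := by
  have := ((Ex.lin z w).zpow k).inv
  simpa [h] using this

lemma MM_nonpos (z : ℂ) : MM r₁ r₂ m z ≤ 0 := min_le_left _ _

lemma Lo_inv_pow (w : ℂ) (k : ℕ) (h : (k : ℤ) ≤ - MM r₁ r₂ m w) (z : ℂ) :
    Lo z (MM r₁ r₂ m z) ((RatFunc.X - RatFunc.C w) ^ k)⁻¹ := by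
  by_cases hz : z = w
  · subst hz
    exact (Ex_inv_pow z k).lo.mono (by omega)
  · exact (Ex_inv_pow_ne z w hz k).lo.mono (MM_nonpos z)

lemma span_lo (hω : ω = 3 + max r₁.re r₂.re)
    (hm : ∀ s ∈ m.support, ω ≤ s.re ∧ s.re < ω + 2) {b : RatFunc ℂ}
    (hb : b ∈ Submodule.span ℂ (Kgen r₁ r₂ m)) (z : ℂ) : Lo z (MM r₁ r₂ m z) b := by
  induction hb using Submodule.span_induction with
  | mem x hx =>
    rcases hx with (⟨p, rfl⟩ | ⟨s, hs, i, k, hk, hk', rfl⟩) | ⟨s, hs, i, k, hi, hk, hk', rfl⟩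
    · exact (Lo.poly z p).mono (MM_nonpos z)
    · apply Lo_inv_pow
      have := SS_up hm (Finsupp.mem_support_iff.2 hs.ne) i
      unfold MM
      omega
    · apply Lo_inv_pow
      obtain ⟨j, rfl⟩ := Nat.exists_eq_add_of_lt hi
      have := TT_down hω hm (Finsupp.mem_support_iff.2 hs.ne') j
      rw [zero_add] at *
      push_cast
      unfold MM
      omega
  | zero => exact Lo.zero _ _
  | add x y _ _ hx hy => exact hx.add hy
  | smul a x _ hx => exact hx.smul a

lemma span_X {b : RatFunc ℂ} (hb : b ∈ Submodule.span ℂ (Kgen r₁ r₂ m)) :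
    RatFunc.X * b ∈ Submodule.span ℂ (Kgen r₁ r₂ m) := by
  have key : ∀ (w : ℂ) (k : ℕ), 1 ≤ k →
      (∀ j : ℕ, 1 ≤ j → j ≤ k → ((RatFunc.X - RatFunc.C w) ^ j)⁻¹ ∈ Kgen r₁ r₂ m) →
      RatFunc.X * ((RatFunc.X - RatFunc.C w) ^ k)⁻¹ ∈ Submodule.span ℂ (Kgen r₁ r₂ m) := by
    intro w k hk h
    obtain ⟨k, rfl⟩ := Nat.exists_eq_add_of_le' hk
    have e : RatFunc.X * ((RatFunc.X - RatFunc.C w) ^ (k + 1))⁻¹ =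
        ((RatFunc.X - RatFunc.C w) ^ k)⁻¹ + w • ((RatFunc.X - RatFunc.C w) ^ (k + 1))⁻¹ := by
      rw [RatFunc.smul_eq_C_mul]
      have := XC_ne w
      field_simp
      ring
    rw [e]
    refine Submodule.add_mem _ ?_ (Submodule.smul_mem _ _ (Submodule.subset_span (h _ hk le_rfl)))
    apply Submodule.subset_span
    cases k with
    | zero => exact Or.inl (Or.inl ⟨1, by simp⟩)
    | succ k => exact h _ (by omega) (by omega)
  induction hb using Submodule.span_induction with
  | mem x hx =>
    rcases hx with (⟨p, rfl⟩ | ⟨s, hs, i, k, hk, hk', rfl⟩) | ⟨s, hs, i, k, hi, hk, hk', rfl⟩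
    · exact Submodule.subset_span (Or.inl (Or.inl ⟨Polynomial.X * p, by simp⟩))
    · exact key _ _ hk fun j h1 h2 => Or.inl (Or.inr ⟨s, hs, i, j, h1, by omega, rfl⟩)
    · exact key _ _ hk fun j h1 h2 => Or.inr ⟨s, hs, i, j, hi, h1, by omega, rfl⟩
  | zero => simp
  | add x y _ _ hx hy => rw [mul_add]; exact Submodule.add_mem _ hx hy
  | smul a x _ hx => rw [mul_smul_comm]; exact Submodule.smul_mem _ _ hx

lemma span_ex (hω : ω = 3 + max r₁.re r₂.re)
    (hm : ∀ s ∈ m.support, ω ≤ s.re ∧ s.re < ω + 2) (z : ℂ) :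
    ∃ b ∈ Submodule.span ℂ (Kgen r₁ r₂ m), Ex z (MM r₁ r₂ m z) b := by
  have h0 : MM r₁ r₂ m z = 0 →
      ∃ b ∈ Submodule.span ℂ (Kgen r₁ r₂ m), Ex z (MM r₁ r₂ m z) b := by
    intro h
    rw [h]
    exact ⟨1, Submodule.subset_span (Or.inl (Or.inl ⟨1, by simp⟩)), Ex.one z⟩
  by_cases hM : MM r₁ r₂ m z = 0
  · exact h0 hM
  have hM' : MM r₁ r₂ m z < 0 := lt_of_le_of_ne (MM_nonpos z) hM
  obtain ⟨k, hk⟩ := Int.eq_ofNat_of_zero_le (show 0 ≤ - MM r₁ r₂ m z by omega)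
  refine ⟨((RatFunc.X - RatFunc.C z) ^ k)⁻¹, Submodule.subset_span ?_, ?_⟩
  swap
  · have := Ex_inv_pow z k
    convert this using 1
    omega
  rcases cases3 m z with h | ⟨s, hs, i, rfl⟩ | ⟨s, hs, i, rfl⟩
  · exfalso
    have h1 := RR_nonneg r₁ z
    have h2 := RR_nonneg r₂ z
    unfold MM TT at *
    omega
  · have h1 := TT_up hω hm hs i
    have h2 := SS_up hm hs i
    unfold MM at *
    exact Or.inl (Or.inr ⟨s, by omega, i, k, by omega, by omega, rfl⟩)
  · have h1 := TT_down hω hm hs i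
    have h2 := SS_down hm hs i
    have h3 : 0 ≤ rootCount r₁ r₂ s (i + 1) := by
      unfold rootCount; split_ifs <;> simp
    unfold MM at *
    exact Or.inr ⟨s, by omega, i + 1, k, by omega, by omega, by omega, by push_cast; rfl⟩

lemma mem_span_iff (hω : ω = 3 + max r₁.re r₂.re)
    (hm : ∀ s ∈ m.support, ω ≤ s.re ∧ s.re < ω + 2) {b : RatFunc ℂ} :
    b ∈ Submodule.span ℂ (Kgen r₁ r₂ m) ↔ ∀ z, Lo z (MM r₁ r₂ m z) b := by
  refine ⟨fun h z => span_lo hω hm h z, fun h => ?_⟩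
  refine mem_of_local _ (fun b hb => span_X hb) b fun z => ?_
  obtain ⟨b', hb', h'⟩ := span_ex hω hm z
  exact ⟨b', hb', _, h', h z⟩

end strip

lemma Ex_u (m : ℂ →₀ ℤ) {c : ℂ} (hc : c ≠ 0) (z : ℂ) :
    Ex z (m z) (RatFunc.C c * m.prod (fun t (n : ℤ) => (RatFunc.X - RatFunc.C t) ^ n)) := by
  classical
  have h : ∀ S : Finset ℂ, Ex z (∑ s ∈ S, if z = s then m s else 0)
      (∏ s ∈ S, (RatFunc.X - RatFunc.C s) ^ (m s)) := by
    intro S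
    induction S using Finset.induction_on with
    | empty => simpa using Ex.one z
    | insert a S ha ih =>
      rw [Finset.sum_insert ha, Finset.prod_insert ha]
      refine Ex.mul ?_ ih
      have := (Ex.lin z a).zpow (m a)
      simpa using this
  have := (Ex.const z hc).mul (h m.support)
  rw [zero_add, ← m_eq_sum] at this
  exact this

lemma exists_far (S : Finset ℂ) (z : ℂ) (B : ℝ) :
    ∃ n : ℕ, z - 2 * n ∉ S ∧ z + 2 * n ∉ S ∧ (z - 2 * n).re < B ∧ -B < (z + 2 * n).re := by
  obtain ⟨C, hC⟩ : ∃ C : ℝ, ∀ s ∈ S, |s.re| ≤ C := by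
    obtain ⟨C, hC⟩ := (S.image fun s => |s.re|).bddAbove
    exact ⟨C, fun s hs => hC (by simpa using ⟨s, hs, rfl⟩)⟩
  obtain ⟨n, hn⟩ := exists_nat_gt (|z.re| + |B| + |C|)
  have e1 : (z - 2 * (n : ℂ)).re = z.re - 2 * n := by simp
  have e2 : (z + 2 * (n : ℂ)).re = z.re + 2 * n := by simp
  have a1 := abs_le.1 (le_refl |z.re|)
  have a2 := abs_le.1 (le_refl |B|)
  have a3 := abs_le.1 (le_refl |C|)
  have b1 := abs_nonneg z.re
  have b2 := abs_nonneg B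
  have b3 := abs_nonneg C
  refine ⟨n, fun h => ?_, fun h => ?_, ?_, ?_⟩
  · have := abs_le.1 (hC _ h)
    rw [e1] at this
    linarith
  · have := abs_le.1 (hC _ h)
    rw [e2] at this
    linarith
  · rw [e1]; linarith
  · rw [e2]; linarith

/-- Main theorem: with `u = c·∏_{t ∈ ℂ_ω}(X − t)^{m t}` as in the classification, the
subspace `K_u` is invariant under multiplication by `X` and under `E_u`, `F_u`, and every
nonzero invariant subspace of `ℂ(X)` contains `K_u`; hence `K_u` is the unique simple
submodule `L_u` of `ℂ(X)` for this `sl₂`-action. -/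
theorem stmt10 (σ : RatFunc ℂ ≃ₐ[ℂ] RatFunc ℂ) (hσ : σ RatFunc.X = RatFunc.X - 2)
    (θ r₁ r₂ : ℂ)
    (hr : RatFunc.C θ - (RatFunc.X + 1) ^ 2 =
      -((RatFunc.X - RatFunc.C r₁) * (RatFunc.X - RatFunc.C r₂)))
    (ω : ℝ) (hω : ω = 3 + max r₁.re r₂.re)
    (c : ℂ) (hc : c ≠ 0) (m : ℂ →₀ ℤ)
    (hm : ∀ s ∈ m.support, ω ≤ s.re ∧ s.re < ω + 2)
    (u : RatFunc ℂ)
    (hu : u = RatFunc.C c * m.prod (fun t (n : ℤ) => (RatFunc.X - RatFunc.C t) ^ n))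
    (E F : RatFunc ℂ → RatFunc ℂ)
    (hE : ∀ b, E b = σ b * u)
    (hF : ∀ b, F b = (RatFunc.C θ - (RatFunc.X + 1) ^ 2) / 4 * σ.symm b * (σ.symm u)⁻¹) :
    (∀ b ∈ Submodule.span ℂ (Kgen r₁ r₂ m),
      RatFunc.X * b ∈ Submodule.span ℂ (Kgen r₁ r₂ m) ∧
      E b ∈ Submodule.span ℂ (Kgen r₁ r₂ m) ∧
      F b ∈ Submodule.span ℂ (Kgen r₁ r₂ m)) ∧
    (∀ V : Submodule ℂ (RatFunc ℂ), V ≠ ⊥ →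
      (∀ b ∈ V, RatFunc.X * b ∈ V) →
      (∀ b ∈ V, E b ∈ V) →
      (∀ b ∈ V, F b ∈ V) →
      Submodule.span ℂ (Kgen r₁ r₂ m) ≤ V) := by
  classical
  have hσ' : σ RatFunc.X = RatFunc.X - RatFunc.C 2 := by
    rw [hσ, map_ofNat]
  have hσs : σ.symm RatFunc.X = RatFunc.X - RatFunc.C (-2) := by
    rw [AlgEquiv.symm_apply_eq, map_sub, hσ', tau_C, map_neg]
    ring
  have hEx : ∀ z, Ex z (m z) u := fun z => by rw [hu]; exact Ex_u m hc z
  have hExs : ∀ z, Ex z (- m (z + 2)) (σ.symm u)⁻¹ := fun z => by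
    have := ((hEx (z + 2)).shift σ.symm (-2) hσs).inv
    simpa using this
  have hroots : ∀ z, Ex z ((if z = r₁ then 1 else 0) + (if z = r₂ then 1 else 0))
      ((RatFunc.C θ - (RatFunc.X + 1) ^ 2) / 4) := fun z => by
    have h1 := ((Ex.lin z r₁).mul (Ex.lin z r₂)).mul
      (Ex.const z (c := -(1 / 4)) (by norm_num))
    rw [add_zero] at h1
    convert h1 using 1
    rw [hr]
    simp only [map_neg, map_div₀, map_one, map_ofNat]
    ring
  have exE : ∀ z n b, Ex z n b → Ex (z + 2) (n + m (z + 2)) (E b) := fun z n b h => by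
    rw [hE]; exact (h.shift σ 2 hσ').mul (hEx _)
  have loE : ∀ z n b, Lo z n b → Lo (z + 2) (n + m (z + 2)) (E b) := fun z n b h => by
    rw [hE]; exact (h.shift σ 2 hσ').mul (hEx _).lo
  have exF : ∀ z n b, Ex (z + 2) n b → Ex z
      (((if z = r₁ then 1 else 0) + (if z = r₂ then 1 else 0)) + n + - m (z + 2)) (F b) :=
    fun z n b h => by
      rw [hF]
      have h' := h.shift σ.symm (-2) hσs
      rw [add_neg_cancel_right] at h'
      exact ((hroots z).mul h').mul (hExs z)
  have loF : ∀ z n b, Lo (z + 2) n b → Lo z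
      (((if z = r₁ then 1 else 0) + (if z = r₂ then 1 else 0)) + n + - m (z + 2)) (F b) :=
    fun z n b h => by
      rw [hF]
      have h' := h.shift σ.symm (-2) hσs
      rw [add_neg_cancel_right] at h'
      exact ((hroots z).lo.mul h').mul (hExs z).lo
  refine ⟨fun b hb => ⟨span_X hb, ?_, ?_⟩, ?_⟩
  · rw [mem_span_iff hω hm] at hb ⊢
    intro z
    have h1 := loE _ _ _ (hb (z - 2))
    have h2 := MM_E hω hm (z - 2)
    rw [sub_add_cancel] at h1 h2
    exact h1.mono h2
  · rw [mem_span_iff hω hm] at hb ⊢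
    intro z
    refine (loF _ _ _ (hb (z + 2))).mono ?_
    have := MM_F hω hm z
    linarith
  · intro V hV hX hVE hVF x hx
    rw [mem_span_iff hω hm] at hx
    obtain ⟨b, hb, hb0⟩ := Submodule.exists_mem_ne_zero_of_ne_bot hV
    obtain ⟨S, hS⟩ := Ex.generic b hb0
    have iterE : ∀ (n : ℕ) (w : ℂ), Ex w (SS m w) b →
        ∃ b' ∈ V, Ex (w + 2 * n) (SS m (w + 2 * n)) b' := by
      intro n w h
      induction n with
      | zero => exact ⟨b, hb, by simpa using h⟩
      | succ n ih =>
        obtain ⟨b', hb', h'⟩ := ih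
        refine ⟨E b', hVE _ hb', ?_⟩
        have := exE _ _ _ h'
        rw [← SS_rec] at this
        have e : w + 2 * ((n + 1 : ℕ) : ℂ) = w + 2 * n + 2 := by push_cast; ring
        rwa [e]
    have iterF : ∀ (n : ℕ) (w : ℂ), Ex w (-TT r₁ r₂ m w) b →
        ∃ b' ∈ V, Ex (w - 2 * n) (-TT r₁ r₂ m (w - 2 * n)) b' := by
      intro n w h
      induction n with
      | zero => exact ⟨b, hb, by simpa using h⟩
      | succ n ih =>
        obtain ⟨b', hb', h'⟩ := ih
        refine ⟨F b', hVF _ hb', ?_⟩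
        have e : w - 2 * (n : ℂ) = w - 2 * ((n + 1 : ℕ) : ℂ) + 2 := by push_cast; ring
        rw [e] at h'
        have := exF _ _ _ h'
        convert this using 1
        rw [TT_rec r₁ r₂ m (w - 2 * ((n + 1 : ℕ) : ℂ))]
        ring
    have getS : ∀ z, ∃ b' ∈ V, Ex z (SS m z) b' := by
      intro z
      obtain ⟨n, h1, -, h3, -⟩ := exists_far S z ω
      have h0 : SS m (z - 2 * n) = 0 := SS_zero m _ fun s hs => lt_of_lt_of_le h3 (hm s hs).1
      have := iterE n (z - 2 * n) (by rw [h0]; exact hS _ h1)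
      rwa [sub_add_cancel] at this
    have getT : ∀ z, ∃ b' ∈ V, Ex z (-TT r₁ r₂ m z) b' := by
      intro z
      obtain ⟨n, -, h2, -, h4⟩ := exists_far S z (-ω)
      rw [neg_neg] at h4
      have h5 := le_max_left r₁.re r₂.re
      have h6 := le_max_right r₁.re r₂.re
      have h0 : TT r₁ r₂ m (z + 2 * n) = 0 := by
        unfold TT
        rw [T0_zero, RR_zero, RR_zero]
        · simp
        · linarith
        · linarith
        · intro s hs
          have := hm s hs
          linarith
      have := iterF n (z + 2 * n) (by rw [h0]; exact hS _ h2)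
      rwa [add_sub_cancel_right] at this
    refine mem_of_local V hX x fun z => ?_
    have hor : MM r₁ r₂ m z = SS m z ∨ MM r₁ r₂ m z = -TT r₁ r₂ m z := by
      have := SS_or_TT hω hm z
      unfold MM
      omega
    rcases hor with h | h
    · obtain ⟨b', hb', h'⟩ := getS z
      exact ⟨b', hb', _, h', h ▸ hx z⟩
    · obtain ⟨b', hb', h'⟩ := getT z
      exact ⟨b', hb', _, h', h ▸ hx z⟩

end
end

section
/- With θ, r₁, r₂, ω, c, m, u as in the classification (u = c·∏_{t ∈ ℂ_ω}(X − t)^{m(t)} with supp m ⊆ ℂ_ω, ω = 3 + max(Re r₁, Re r₂)), the module L_u = K_u is finitely generated over ℂ[X] if and only if for every s ∈ ℂ_ω one has 0 ≤ m(s) ≤ #{j ∈ {1,2} : r_j ∈ s − 2ℤ_{>0}}. -/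
noncomputable section

theorem denom_aux (S : Submodule (Polynomial ℂ) (RatFunc ℂ)) (hS : S.FG) (f : ℕ → ℂ)
    (hf : Function.Injective f)
    (h : ∀ i : ℕ, 0 < i → (RatFunc.X - RatFunc.C (f i))⁻¹ ∈ S) : False := by
  obtain ⟨d, hd, hdS⟩ := FractionalIdeal.isFractional_of_fg (S := nonZeroDivisors (Polynomial ℂ)) hS
  have hd0 : d ≠ 0 := nonZeroDivisors.ne_zero hd
  have hroot : ∀ i : ℕ, 0 < i → d.IsRoot (f i) := by
    intro i hi
    obtain ⟨q, hq⟩ := hdS _ (h i hi)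
    have hx : (RatFunc.X - RatFunc.C (f i) : RatFunc ℂ)
        = algebraMap (Polynomial ℂ) (RatFunc ℂ) (Polynomial.X - Polynomial.C (f i)) := by
      simp
    have hne : (RatFunc.X - RatFunc.C (f i) : RatFunc ℂ) ≠ 0 := by
      rw [hx]
      exact (map_ne_zero_iff _ (RatFunc.algebraMap_injective ℂ)).2 (Polynomial.X_sub_C_ne_zero _)
    rw [Algebra.smul_def, eq_mul_inv_iff_mul_eq₀ hne, hx, ← map_mul] at hq
    have := RatFunc.algebraMap_injective ℂ hq
    rw [← Polynomial.dvd_iff_isRoot]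
    exact ⟨q, by rw [← this, mul_comm]⟩
  have hinf : Set.Infinite {x | d.IsRoot x} := by
    refine Set.Infinite.mono ?_ ((Set.Ioi_infinite 0).image (hf.injOn (s := Set.Ioi 0)))
    rintro _ ⟨i, hi, rfl⟩
    exact hroot i hi
  exact hd0 (Polynomial.eq_zero_of_infinite_isRoot d hinf)

theorem rootCount_le_aux (r₁ r₂ s : ℂ) (i : ℕ) [Decidable (∃ l : ℕ, 0 < l ∧ r₁ = s - 2 * (l : ℂ))]
    [Decidable (∃ l : ℕ, 0 < l ∧ r₂ = s - 2 * (l : ℂ))] :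
    rootCount r₁ r₂ s i ≤ (if ∃ l : ℕ, 0 < l ∧ r₁ = s - 2 * (l : ℂ) then 1 else 0) +
              (if ∃ l : ℕ, 0 < l ∧ r₂ = s - 2 * (l : ℂ) then 1 else 0) := by
  have key : ∀ r : ℂ, (∃ l : ℕ, 2 ≤ l ∧ l ≤ i ∧ r = s - 2 * (l : ℂ)) →
      ∃ l : ℕ, 0 < l ∧ r = s - 2 * (l : ℂ) := by
    rintro r ⟨l, h2, -, h⟩
    exact ⟨l, by omega, h⟩
  have k1 := key r₁
  have k2 := key r₂
  unfold rootCount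
  apply add_le_add <;> split_ifs <;> first | exact absurd (k1 (by assumption)) (by assumption) | exact absurd (k2 (by assumption)) (by assumption) | simp

theorem le_rootCount_aux (r₁ r₂ s : ℂ) (h₁ : r₁.re + 3 ≤ s.re) (h₂ : r₂.re + 3 ≤ s.re)
    [Decidable (∃ l : ℕ, 0 < l ∧ r₁ = s - 2 * (l : ℂ))]
    [Decidable (∃ l : ℕ, 0 < l ∧ r₂ = s - 2 * (l : ℂ))] :
    ∃ N : ℕ, ∀ i, N ≤ i → (if ∃ l : ℕ, 0 < l ∧ r₁ = s - 2 * (l : ℂ) then 1 else 0) +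
              (if ∃ l : ℕ, 0 < l ∧ r₂ = s - 2 * (l : ℂ) then 1 else 0) ≤
              rootCount r₁ r₂ s i := by
  have key : ∀ r : ℂ, r.re + 3 ≤ s.re → ∃ N : ℕ, ∀ i, N ≤ i →
      (∃ l : ℕ, 0 < l ∧ r = s - 2 * (l : ℂ)) →
      (∃ l : ℕ, 2 ≤ l ∧ l ≤ i ∧ r = s - 2 * (l : ℂ)) := by
    intro r hr
    by_cases h : ∃ l : ℕ, 0 < l ∧ r = s - 2 * (l : ℂ)
    · obtain ⟨l, hl, e⟩ := h
      refine ⟨l, fun i hi _ => ⟨l, ?_, hi, e⟩⟩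
      have e' := congrArg Complex.re e
      simp at e'
      by_contra hlt
      have : l = 1 := by omega
      subst this
      norm_num at e'
      linarith
    · exact ⟨0, fun i _ h' => absurd h' h⟩
  obtain ⟨N₁, k1⟩ := key r₁ h₁
  obtain ⟨N₂, k2⟩ := key r₂ h₂
  refine ⟨max N₁ N₂, fun i hi => ?_⟩
  have k1 := k1 i (le_trans (le_max_left _ _) hi)
  have k2 := k2 i (le_trans (le_max_right _ _) hi)
  unfold rootCount
  apply add_le_add <;> split_ifs <;> first | exact absurd (k1 (by assumption)) (by assumption) | exact absurd (k2 (by assumption)) (by assumption) | simp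

open Classical in
/-- The module `L_u = K_u` is finitely generated over `ℂ[X]` if and only if, for every
`s ∈ ℂ_ω`, one has `0 ≤ m s ≤ #{j ∈ {1,2} : r_j ∈ s − 2ℤ_{>0}}`. -/
theorem stmt11 (σ : RatFunc ℂ ≃ₐ[ℂ] RatFunc ℂ) (hσ : σ RatFunc.X = RatFunc.X - 2)
    (θ r₁ r₂ : ℂ)
    (hr : RatFunc.C θ - (RatFunc.X + 1) ^ 2 =
      -((RatFunc.X - RatFunc.C r₁) * (RatFunc.X - RatFunc.C r₂)))
    (ω : ℝ) (hω : ω = 3 + max r₁.re r₂.re)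
    (c : ℂ) (hc : c ≠ 0) (m : ℂ →₀ ℤ)
    (hm : ∀ s ∈ m.support, ω ≤ s.re ∧ s.re < ω + 2)
    (u : RatFunc ℂ)
    (hu : u = RatFunc.C c * m.prod (fun t (n : ℤ) => (RatFunc.X - RatFunc.C t) ^ n)) :
    (Submodule.span (Polynomial ℂ) (Kgen r₁ r₂ m)).FG ↔
      ∀ s : ℂ, (ω ≤ s.re ∧ s.re < ω + 2) →
        0 ≤ m s ∧
        m s ≤ (if ∃ l : ℕ, 0 < l ∧ r₁ = s - 2 * (l : ℂ) then 1 else 0) +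
              (if ∃ l : ℕ, 0 < l ∧ r₂ = s - 2 * (l : ℂ) then 1 else 0) := by
  constructor
  · intro hFG s hs
    constructor
    · by_contra hneg
      refine denom_aux _ hFG (fun i => s + 2 * (i : ℂ)) (fun a b hab => by simpa using hab) ?_
      intro i hi
      refine Submodule.subset_span (Or.inl (Or.inr ⟨s, by omega, i, 1, le_rfl, ?_, by simp⟩))
      push_cast
      omega
    · by_contra hgt
      refine denom_aux _ hFG (fun i => s - 2 * (i : ℂ)) (fun a b hab => by simpa using hab) ?_
      intro i hi
      have h1 := rootCount_le_aux r₁ r₂ s i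
      have h0 : 0 ≤ rootCount r₁ r₂ s i := by
        unfold rootCount
        apply add_nonneg <;> split_ifs <;> simp
      refine Submodule.subset_span (Or.inr ⟨s, ?_, i, 1, hi, le_rfl, ?_, by simp⟩)
      · linarith
      · push_cast
        linarith
  · intro h
    have hN : ∀ s : ℂ, ∃ N : ℕ, s ∈ m.support → ∀ i, N ≤ i → m s ≤ rootCount r₁ r₂ s i := by
      intro s
      by_cases hs : s ∈ m.support
      · have hs' := hm s hs
        have a1 := le_max_left r₁.re r₂.re
        have a2 := le_max_right r₁.re r₂.re
        obtain ⟨N, hN⟩ := le_rootCount_aux r₁ r₂ s (by linarith) (by linarith)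
        exact ⟨N, fun _ i hi => (h s hs').2.trans (hN i hi)⟩
      · exact ⟨0, fun h => absurd h hs⟩
    choose N hN using hN
    let T : Set (RatFunc ℂ) := {1} ∪ ⋃ s ∈ m.support, ⋃ i ∈ Set.Iio (N s),
      ⋃ k ∈ Set.Iic (m s).toNat, {((RatFunc.X - RatFunc.C (s - 2 * (i : ℂ))) ^ k)⁻¹}
    have hT : T.Finite := by
      refine (Set.finite_singleton _).union ?_
      refine Set.Finite.biUnion m.support.finite_toSet fun s _ => ?_
      refine Set.Finite.biUnion (Set.finite_Iio _) fun i _ => ?_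
      exact Set.Finite.biUnion (Set.finite_Iic _) fun k _ => Set.finite_singleton _
    have hfg : (Submodule.span (Polynomial ℂ) T).FG := Submodule.fg_span hT
    refine Submodule.FG.of_le hfg ?_
    rw [Submodule.span_le]
    rintro x ((⟨p, rfl⟩ | ⟨s, hs, _⟩) | ⟨s, hs, i, k, hi, hk, hk', rfl⟩)
    · rw [Algebra.algebraMap_eq_smul_one]
      exact Submodule.smul_mem _ _ (Submodule.subset_span (Or.inl rfl))
    · have hs' := hm s (Finsupp.mem_support_iff.2 hs.ne)
      have := (h s hs').1
      omega
    · have hsup : s ∈ m.support := Finsupp.mem_support_iff.2 hs.ne'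
      have h0 : 0 ≤ rootCount r₁ r₂ s i := by
        unfold rootCount
        apply add_nonneg <;> split_ifs <;> simp
      refine Submodule.subset_span (Or.inr ?_)
      simp only [Set.mem_iUnion]
      refine ⟨s, hsup, i, ?_, k, ?_, rfl⟩
      · by_contra hlt
        have := hN s hsup i (not_lt.1 hlt)
        omega
      · simp only [Set.mem_Iic]
        omega

end
end

section
/- Let σ be the ℂ-algebra automorphism of ℂ(X) with σ(X) = X − 2 and let u ∈ ℂ(X) be nonzero. The ℂ-linear operators A_u and B_u on ℂ(X) defined by A_u(b) = σ(b)·u and B_u(b) = −(X/2)·σ⁻¹(b)·σ⁻¹(u)⁻¹ satisfy A_u∘B_u − B_u∘A_u = id, i.e. they define an action of the first Weyl algebra A₁ = ⟨a, b : ab − ba = 1⟩ on ℂ(X). Moreover, the operator −2·B_u∘A_u equals multiplication by X. -/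
/-- Let `σ` be the `ℂ`-algebra automorphism of `ℂ(X)` with `σ(X) = X − 2` and `u ∈ ℂ(X)`
nonzero.  The operators `A_u(b) = σ(b)·u` and `B_u(b) = −(X/2)·σ⁻¹(b)·σ⁻¹(u)⁻¹` on `ℂ(X)`
satisfy `A_u∘B_u − B_u∘A_u = id` (the defining relation of the first Weyl algebra), and
`−2·B_u∘A_u` is multiplication by `X`. -/
theorem stmt12 (σ : RatFunc ℂ ≃ₐ[ℂ] RatFunc ℂ) (hσ : σ RatFunc.X = RatFunc.X - 2)
    (u : RatFunc ℂ) (hu : u ≠ 0)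
    (A B : RatFunc ℂ → RatFunc ℂ)
    (hA : ∀ b, A b = σ b * u)
    (hB : ∀ b, B b = -(RatFunc.X / 2) * σ.symm b * (σ.symm u)⁻¹) :
    (∀ b, A (B b) - B (A b) = b) ∧
    (∀ b, -2 * B (A b) = RatFunc.X * b) := by
  have hs : σ.symm u ≠ 0 := by
    simpa using hu
  have h2 : (2 : RatFunc ℂ) ≠ 0 := two_ne_zero
  have hσ2 : σ (2 : RatFunc ℂ) = 2 := map_ofNat σ 2
  have hBA : ∀ b, B (A b) = -(RatFunc.X / 2) * b := by
    intro b
    rw [hB, hA, map_mul, AlgEquiv.symm_apply_apply]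
    field_simp
  have hAB : ∀ b, A (B b) = -((RatFunc.X - 2) / 2) * b := by
    intro b
    rw [hA, hB, map_mul, map_mul, map_neg, map_div₀, map_inv₀, hσ, hσ2,
      AlgEquiv.apply_symm_apply, AlgEquiv.apply_symm_apply]
    field_simp
  refine ⟨fun b => ?_, fun b => ?_⟩
  · rw [hAB, hBA]
    field_simp
    ring
  · rw [hBA]
    field_simp
end

section
/- With u = c·∏_{t ∈ ℂ_0}(X − t)^{m(t)} as in the classification (c ∈ ℂˣ, m finitely supported with support in ℂ_0), the module F_u = D_u is finitely generated over ℂ[X] if and only if m is either the zero function, or m(s) ≠ 0 implies s = 0 and additionally m(0) = 1. -/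
noncomputable section

/-- The spanning set of `D_u`: (i) `ℂ[X]`; (ii) `1/(X − s − 2i)^k` for `m s < 0`, `i ≥ 0`,
`1 ≤ k ≤ −m s`; (iii) `1/(X − s + 2i)^k` for `s ≠ 0`, `m s > 0`, `i > 0`, `1 ≤ k ≤ m s`;
(iv) if `m 0 > 0`, also `1/(X + 2i)^k` for `i > 0`, `1 ≤ k ≤ m 0 − 1`. -/
def Dgen (m : ℂ →₀ ℤ) : Set (RatFunc ℂ) :=
  {x | ∃ p : Polynomial ℂ, x = algebraMap (Polynomial ℂ) (RatFunc ℂ) p} ∪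
  {x | ∃ s : ℂ, m s < 0 ∧ ∃ i k : ℕ, 1 ≤ k ∧ (k : ℤ) ≤ -m s ∧
    x = ((RatFunc.X - RatFunc.C (s + 2 * (i : ℂ))) ^ k)⁻¹} ∪
  {x | ∃ s : ℂ, s ≠ 0 ∧ 0 < m s ∧ ∃ i k : ℕ, 0 < i ∧ 1 ≤ k ∧ (k : ℤ) ≤ m s ∧
    x = ((RatFunc.X - RatFunc.C (s - 2 * (i : ℂ))) ^ k)⁻¹} ∪
  {x | 0 < m 0 ∧ ∃ i k : ℕ, 0 < i ∧ 1 ≤ k ∧ (k : ℤ) ≤ m 0 - 1 ∧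
    x = ((RatFunc.X + RatFunc.C (2 * (i : ℂ))) ^ k)⁻¹}

theorem not_fg_of_inj (N : Submodule (Polynomial ℂ) (RatFunc ℂ)) (hN : N.FG) (f : ℕ → ℂ)
    (hf : Function.Injective f) (h : ∀ i, (RatFunc.X - RatFunc.C (f i))⁻¹ ∈ N) : False := by
  obtain ⟨q, hq, hq'⟩ := FractionalIdeal.isFractional_of_fg
    (S := nonZeroDivisors (Polynomial ℂ)) (I := N) hN
  have hq0 : q ≠ 0 := nonZeroDivisors.ne_zero hq
  apply hq0
  refine Polynomial.eq_zero_of_infinite_isRoot q ((Set.infinite_range_of_injective hf).mono ?_)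
  rintro _ ⟨i, rfl⟩
  obtain ⟨p, hp⟩ := hq' _ (h i)
  have e : (RatFunc.X - RatFunc.C (f i) : RatFunc ℂ)
      = algebraMap (Polynomial ℂ) (RatFunc ℂ) (Polynomial.X - Polynomial.C (f i)) := by
    simp
  have hne : (RatFunc.X - RatFunc.C (f i) : RatFunc ℂ) ≠ 0 := by
    rw [e]
    exact (map_ne_zero_iff _ (RatFunc.algebraMap_injective ℂ)).2 (Polynomial.X_sub_C_ne_zero _)
  rw [Algebra.smul_def, eq_mul_inv_iff_mul_eq₀ hne, e, ← map_mul] at hp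
  have := RatFunc.algebraMap_injective ℂ hp
  simp [← this, Polynomial.IsRoot]

/-- With `u = c·∏_{t ∈ ℂ_0}(X − t)^{m t}` in canonical form, the module `F_u = D_u` is
finitely generated over `ℂ[X]` if and only if `m` is the zero function, or `m s ≠ 0`
implies `s = 0` and additionally `m 0 = 1`. -/
theorem stmt15 (σ : RatFunc ℂ ≃ₐ[ℂ] RatFunc ℂ) (hσ : σ RatFunc.X = RatFunc.X - 2)
    (c : ℂ) (hc : c ≠ 0) (m : ℂ →₀ ℤ)
    (hm : ∀ s ∈ m.support, 0 ≤ s.re ∧ s.re < 2)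
    (u : RatFunc ℂ)
    (hu : u = RatFunc.C c * m.prod (fun t (n : ℤ) => (RatFunc.X - RatFunc.C t) ^ n)) :
    (Submodule.span (Polynomial ℂ) (Dgen m)).FG ↔
      (m = 0 ∨ ((∀ s : ℂ, m s ≠ 0 → s = 0) ∧ m 0 = 1)) := by
  constructor
  · intro hfg
    have hneg : ∀ s, 0 ≤ m s := by
      intro s
      by_contra! hs
      refine not_fg_of_inj _ hfg (fun i => s + 2 * (i : ℂ)) (fun i j hij => by simpa using hij) ?_
      intro i
      refine Submodule.subset_span (Or.inl (Or.inl (Or.inr ⟨s, hs, i, 1, le_rfl, ?_, by simp⟩)))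
      push_cast; omega
    have hpos : ∀ s, m s ≠ 0 → s = 0 := by
      intro s hs
      by_contra hs0
      have h1 : 0 < m s := lt_of_le_of_ne (hneg s) (Ne.symm hs)
      refine not_fg_of_inj _ hfg (fun i => s - 2 * ((i + 1 : ℕ) : ℂ))
        (fun i j hij => by simpa using hij) ?_
      intro i
      refine Submodule.subset_span (Or.inl (Or.inr
        ⟨s, hs0, h1, i + 1, 1, by omega, le_rfl, ?_, by simp⟩))
      push_cast; omega
    have h0 : m 0 ≤ 1 := by
      by_contra! h2
      refine not_fg_of_inj _ hfg (fun i => -(2 * ((i + 1 : ℕ) : ℂ)))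
        (fun i j hij => by simpa using hij) ?_
      intro i
      refine Submodule.subset_span (Or.inr
        ⟨by omega, i + 1, 1, by omega, le_rfl, ?_, ?_⟩)
      · push_cast; omega
      · rw [pow_one, map_neg, sub_neg_eq_add]
    by_cases h : m 0 = 0
    · left
      ext s
      by_contra hs
      have := hpos s hs
      subst this
      exact hs h
    · right
      have := hneg 0
      exact ⟨hpos, by omega⟩
  · intro h
    have hz : ∀ s, s ≠ 0 → m s = 0 := by
      intro s hs
      rcases h with rfl | h
      · rfl
      · by_contra h'
        exact hs (h.1 s h')
    have h01 : m 0 = 0 ∨ m 0 = 1 := by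
      rcases h with rfl | h
      · left; rfl
      · exact Or.inr h.2
    have hs : Submodule.span (Polynomial ℂ) (Dgen m) = Submodule.span (Polynomial ℂ) {1} := by
      apply le_antisymm
      · rw [Submodule.span_le]
        rintro x (((⟨p, rfl⟩ | ⟨s, hs, -⟩) | ⟨s, hs0, hs, -⟩) | ⟨-, i, k, -, hk, hk', -⟩)
        · exact Submodule.mem_span_singleton.2 ⟨p, by rw [Algebra.smul_def, mul_one]⟩
        · exfalso
          by_cases h : s = 0
          · subst h; omega
          · have := hz s h; omega
        · exfalso
          have := hz s hs0; omega
        · exfalso; omega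
      · rw [Submodule.span_le, Set.singleton_subset_iff]
        exact Submodule.subset_span (Or.inl (Or.inl (Or.inl ⟨1, by simp⟩)))
    rw [hs]
    exact Submodule.fg_span_singleton _

end
end

section
/- Let σ₁ be the ℂ-algebra automorphism of ℂ(X) with σ₁(X) = X − 1, let u, v ∈ ℂ(X) be nonzero and λ, λ' ∈ ℂ. There exists a ℂ(X)-linear bijection Φ of ℂ(X) ⊕ ℂ(X) preserving each of the two direct summands (i.e. an even isomorphism) such that Φ∘P_u = P_v∘Φ and Φ∘Q_{u,λ} = Q_{v,λ'}∘Φ if and only if λ = λ' and v ∈ {±1}·G_{σ₁}·u, i.e. v = ±(r/σ₁(r))·u for some nonzero r ∈ ℂ(X). -/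
theorem shift_fixed (σ : RatFunc ℂ ≃ₐ[ℂ] RatFunc ℂ) (hσ : σ RatFunc.X = RatFunc.X - 1)
    (c : RatFunc ℂ) (hc : σ (σ c) = c) : ∃ k : ℂ, c = algebraMap ℂ (RatFunc ℂ) k := by
  have hX : ∀ p : Polynomial ℂ, Polynomial.aeval (RatFunc.X : RatFunc ℂ) p
      = algebraMap (Polynomial ℂ) (RatFunc ℂ) p := by
    intro p
    rw [← RatFunc.algebraMap_X, Polynomial.aeval_algebraMap_apply, Polynomial.aeval_X_left_apply]
  have hq : algebraMap (Polynomial ℂ) (RatFunc ℂ) c.denom ≠ 0 :=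
    RatFunc.algebraMap_ne_zero c.denom_ne_zero
  have h0 : algebraMap (Polynomial ℂ) (RatFunc ℂ) c.num
      - c * algebraMap (Polynomial ℂ) (RatFunc ℂ) c.denom = 0 := by
    have h := RatFunc.num_div_denom c
    rw [div_eq_iff hq] at h
    rw [h, sub_self]
  rw [← hX, ← hX] at h0
  have hn : ∀ n : ℕ, Polynomial.aeval (RatFunc.X - 2 * (n : RatFunc ℂ)) c.num
      - c * Polynomial.aeval (RatFunc.X - 2 * (n : RatFunc ℂ)) c.denom = 0 := by
    intro n
    induction n with
    | zero => simpa using h0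
    | succ n ih =>
      have h := congrArg (fun z => σ (σ z)) ih
      have e : σ (σ (RatFunc.X - 2 * (n : RatFunc ℂ)))
          = RatFunc.X - 2 * ((n + 1 : ℕ) : RatFunc ℂ) := by
        simp only [map_sub, map_mul, map_natCast, map_ofNat, hσ, map_one]
        push_cast
        ring
      have e2 : ∀ p : Polynomial ℂ, σ (σ (Polynomial.aeval (RatFunc.X - 2 * (n : RatFunc ℂ)) p))
          = Polynomial.aeval (RatFunc.X - 2 * ((n + 1 : ℕ) : RatFunc ℂ)) p := by
        intro p
        rw [← e, Polynomial.aeval_algHom_apply, Polynomial.aeval_algHom_apply]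
      simpa only [map_sub, map_mul, hc, e2, map_zero] using h
  have hF : c.num.map (algebraMap ℂ (RatFunc ℂ))
      - Polynomial.C c * c.denom.map (algebraMap ℂ (RatFunc ℂ)) = 0 := by
    refine Polynomial.eq_zero_of_infinite_isRoot _ ?_
    refine (Set.infinite_range_of_injective
      (f := fun n : ℕ => (RatFunc.X - 2 * (n : RatFunc ℂ))) ?_).mono ?_
    · intro a b hab
      have : (a : RatFunc ℂ) = b := by
        have h2 : (2 : RatFunc ℂ) ≠ 0 := two_ne_zero
        exact mul_left_cancel₀ h2 (sub_right_injective hab)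
      exact_mod_cast this
    · rintro _ ⟨n, rfl⟩
      have h := hn n
      simp only [Set.mem_ofPred_eq, Polynomial.IsRoot.def, Polynomial.eval_sub,
        Polynomial.eval_mul, Polynomial.eval_C, Polynomial.eval_map_algebraMap]
      exact h
  have h1 := congrArg (fun p => Polynomial.coeff p c.denom.natDegree) hF
  have hm : c.denom.coeff c.denom.natDegree = 1 := RatFunc.monic_denom c
  simp only [Polynomial.coeff_sub, Polynomial.coeff_C_mul, Polynomial.coeff_map, hm, map_one,
    mul_one, Polynomial.coeff_zero] at h1
  exact ⟨_, (sub_eq_zero.1 h1).symm⟩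

theorem inv_shift (σ : RatFunc ℂ ≃ₐ[ℂ] RatFunc ℂ) (hσ : σ RatFunc.X = RatFunc.X - 1)
    (c : RatFunc ℂ) (hc : c * σ c = 1) : c = 1 ∨ c = -1 := by
  have h1 : σ c * σ (σ c) = 1 := by rw [← map_mul, hc, map_one]
  have hne : σ c ≠ 0 := left_ne_zero_of_mul_eq_one h1
  have h2 : σ (σ c) = c := by
    apply mul_left_cancel₀ hne
    rw [h1, mul_comm, hc]
  obtain ⟨k, rfl⟩ := shift_fixed σ hσ c h2
  rw [AlgEquiv.commutes] at hc
  exact mul_self_eq_one_iff.1 hc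

/-- Even-isomorphism criterion for the `osp(1|2)`-modules `M_{u,λ}`:  there is a
`ℂ(X)`-linear bijection `Φ` of `ℂ(X) ⊕ ℂ(X)` preserving each summand and intertwining
`(P_u, Q_{u,λ})` with `(P_v, Q_{v,λ'})` if and only if `λ = λ'` and
`v = ±(r/σ₁(r))·u` for some nonzero `r ∈ ℂ(X)`, i.e. `v ∈ {±1}·G_{σ₁}·u`. -/
theorem stmt18 (σ₁ : RatFunc ℂ ≃ₐ[ℂ] RatFunc ℂ) (hσ₁ : σ₁ RatFunc.X = RatFunc.X - 1)
    (u v : RatFunc ℂ) (hu : u ≠ 0) (hv : v ≠ 0) (l l' : ℂ)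
    (P : RatFunc ℂ → RatFunc ℂ × RatFunc ℂ → RatFunc ℂ × RatFunc ℂ)
    (Q : RatFunc ℂ → ℂ → RatFunc ℂ × RatFunc ℂ → RatFunc ℂ × RatFunc ℂ)
    (hP : ∀ w z, P w z = (σ₁ z.2 * w, σ₁ z.1 * w))
    (hQ : ∀ w μ z, Q w μ z =
      ((RatFunc.X - RatFunc.C μ) / 2 * σ₁.symm z.2 * (σ₁.symm w)⁻¹,
       (RatFunc.X + RatFunc.C μ + 1) / 2 * σ₁.symm z.1 * (σ₁.symm w)⁻¹)) :
    (∃ Φ : (RatFunc ℂ × RatFunc ℂ) ≃ₗ[RatFunc ℂ] RatFunc ℂ × RatFunc ℂ,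
      (∀ z : RatFunc ℂ × RatFunc ℂ, z.2 = 0 → (Φ z).2 = 0) ∧
      (∀ z : RatFunc ℂ × RatFunc ℂ, z.1 = 0 → (Φ z).1 = 0) ∧
      (∀ z, Φ (P u z) = P v (Φ z)) ∧
      (∀ z, Φ (Q u l z) = Q v l' (Φ z))) ↔
    (l = l' ∧ ∃ r : RatFunc ℂ, r ≠ 0 ∧
      (v = r / σ₁ r * u ∨ v = -(r / σ₁ r * u))) := by
  constructor
  · rintro ⟨Φ, h2, h1, hΦP, hΦQ⟩
    obtain ⟨a, ha⟩ : ∃ a, a = (Φ (1, 0)).1 := ⟨_, rfl⟩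
    obtain ⟨d, hd⟩ : ∃ d, d = (Φ (0, 1)).2 := ⟨_, rfl⟩
    have hΦ : ∀ x y, Φ (x, y) = (x * a, y * d) := by
      intro x y
      have e : ((x, y) : RatFunc ℂ × RatFunc ℂ) = x • (1, 0) + y • (0, 1) := by simp
      have e1 := h2 (1, 0) rfl
      have e2 := h1 (0, 1) rfl
      rw [e, map_add, map_smul, map_smul]
      ext <;> simp [e1, e2, ha, hd]
    have ha0 : a ≠ 0 := by
      rintro rfl
      have := Φ.injective ((hΦ 1 0).trans (by rw [hΦ 0 0]; simp) : Φ (1, 0) = Φ (0, 0))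
      simp at this
    have hd0 : d ≠ 0 := by
      rintro rfl
      have := Φ.injective ((hΦ 0 1).trans (by rw [hΦ 0 0]; simp) : Φ (0, 1) = Φ (0, 0))
      simp at this
    have hp := hΦP (1, 1)
    have hq := hΦQ (1, 1)
    simp only [hP, hQ, hΦ, map_one, one_mul, mul_one, Prod.mk.injEq] at hp hq
    obtain ⟨p1, p2⟩ := hp
    obtain ⟨q1, -⟩ := hq
    have hsu : σ₁.symm u ≠ 0 := by simpa using hu
    have hsv : σ₁.symm v ≠ 0 := by simpa using hv
    have hsa : σ₁ a ≠ 0 := by simpa using ha0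
    constructor
    · have p3 := congrArg σ₁.symm p2
      simp only [map_mul, AlgEquiv.symm_apply_apply] at p3
      have h3 : (RatFunc.X - RatFunc.C l) * (a * σ₁.symm v)
          = (RatFunc.X - RatFunc.C l') * (a * σ₁.symm v) := by
        field_simp at q1
        linear_combination q1 + (RatFunc.X - RatFunc.C l') * p3
      have h4 := mul_right_cancel₀ (mul_ne_zero ha0 hsv) h3
      exact RatFunc.C_injective (sub_right_injective h4)
    · refine ⟨a, ha0, ?_⟩
      have hc : (a / d) * σ₁ (a / d) = 1 := by
        have hsd : σ₁ d ≠ 0 := by simpa using hd0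
        rw [map_div₀, div_mul_div_comm, div_eq_one_iff_eq (mul_ne_zero hd0 hsd)]
        apply mul_right_cancel₀ (mul_ne_zero hu hv)
        linear_combination (σ₁ a * v) * p1 - (σ₁ d * v) * p2
      rcases inv_shift σ₁ hσ₁ _ hc with h | h
      · left
        rw [div_eq_iff hd0] at h
        field_simp
        linear_combination -p2 - u * h
      · right
        rw [div_eq_iff hd0] at h
        field_simp
        linear_combination -p2 + u * h
  · rintro ⟨rfl, r, hr, hv'⟩
    obtain ⟨ε, hε, hse, hvε⟩ : ∃ ε : RatFunc ℂ, ε * ε = 1 ∧ σ₁ ε = ε ∧ v = ε * (r / σ₁ r * u) := by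
      rcases hv' with h | h
      · exact ⟨1, by simp, by simp, by simpa using h⟩
      · exact ⟨-1, by simp, by simp, by simpa using h⟩
    have hε0 : ε ≠ 0 := left_ne_zero_of_mul_eq_one hε
    have hse' : σ₁.symm ε = ε := by rw [AlgEquiv.symm_apply_eq, hse]
    have hsr : σ₁ r ≠ 0 := by simpa using hr
    have hsr' : σ₁.symm r ≠ 0 := by simpa using hr
    have hsu : σ₁.symm u ≠ 0 := by simpa using hu
    refine ⟨LinearEquiv.prodCongr (LinearEquiv.smulOfNeZero _ _ r hr)
      (LinearEquiv.smulOfNeZero _ _ (ε * r) (mul_ne_zero hε0 hr)), ?_, ?_, ?_, ?_⟩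
    · intro z hz
      simp [hz]
    · intro z hz
      simp [hz]
    · rintro ⟨x, y⟩
      simp only [hP, LinearEquiv.prodCongr_apply, LinearEquiv.smulOfNeZero_apply, smul_eq_mul,
        map_mul, hse, hvε, Prod.mk.injEq]
      constructor
      · field_simp
        linear_combination (-σ₁ y) * hε
      · field_simp
    · rintro ⟨x, y⟩
      simp only [hQ, LinearEquiv.prodCongr_apply, LinearEquiv.smulOfNeZero_apply, smul_eq_mul,
        map_mul, map_div₀, AlgEquiv.symm_apply_apply, hse', hvε, Prod.mk.injEq]
      constructor
      · field_simp
      · field_simp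
        linear_combination ((RatFunc.X + RatFunc.C l + 1) * σ₁.symm x) * hε
end
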